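/- Let λ be a d-invariant rational lamination with real extension λ̂. For A a λ̂-class or an infinite λ-unlinked class, let δ(A) be the degree of m_d : A → m_d(A) (for unlinked classes, the degree of the induced circle covering). Then d = 1 + Σ_{C ∈ Crit(λ)} (δ(C) − 1), where Crit(λ) is the set of critical elements (classes or infinite unlinked classes with δ > 1). -/

import Mathlib

noncomputable section
open Set Function

/-- The circle `ℝ/ℤ`. -/
abbrev Circle1 := AddCircle (1 : ℝ)

/-- Multiplication by `d` on the circle. -/
def md (d : ℕ) (x : Circle1) : Circle1 := d • x

/-- The rational angles `ℚ/ℤ ⊆ ℝ/ℤ`. -/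
def ratC : Set Circle1 := {x | ∃ q : ℚ, x = ((q : ℝ) : Circle1)}

/-- `A` and `B` are unlinked: `B` is contained in a single connected
component of the complement of `A`. -/
def Unlinked (A B : Set Circle1) : Prop :=
  ∃ x ∈ Aᶜ, B ⊆ connectedComponentIn Aᶜ x

/-- `C` is a connected component of `S`. -/
def IsCompOf (C S : Set Circle1) : Prop :=
  ∃ x ∈ S, C = connectedComponentIn S x

/-- The class of `x` under a relation `r`. -/
def relClass (r : Circle1 → Circle1 → Prop) (x : Circle1) : Set Circle1 := {y | r x y}

/-- A rational lamination: a closed equivalence relation on `ℚ/ℤ` with finite,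
pairwise unlinked classes. -/
structure RatLam where
  rel : Circle1 → Circle1 → Prop
  rel_rat : ∀ x y, rel x y → x ∈ ratC ∧ y ∈ ratC
  refl : ∀ x ∈ ratC, rel x x
  symm : ∀ x y, rel x y → rel y x
  trans : ∀ x y z, rel x y → rel y z → rel x z
  closed' : ∀ x ∈ ratC, ∀ y ∈ ratC,
    (x, y) ∈ closure {p : Circle1 × Circle1 | rel p.1 p.2} → rel x y
  finiteClass : ∀ x, (relClass rel x).Finite
  unlinkedClass : ∀ x y, ¬ rel x y → Unlinked (relClass rel x) (relClass rel y)

/-- `m_d` maps `A` onto `B` in a consecutive-preserving way: the image of `A` is `B`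
and the connected components of the complement of `A` are sent to components of the
complement of `B` endpoint-wise. -/
def ConsecutiveImage (d : ℕ) (A B : Set Circle1) : Prop :=
  md d '' A = B ∧
    ∀ C, IsCompOf C Aᶜ → ∃ C', IsCompOf C' Bᶜ ∧ frontier C' = md d '' frontier C

/-- A `d`-invariant rational lamination. -/
structure InvRatLam (d : ℕ) extends RatLam where
  invariant : ∀ x ∈ ratC,
    ConsecutiveImage d (relClass rel x) (relClass rel (md d x))

/-- `m_d : A → m_d(A)` is `δ`-to-one. -/
def classDeg (d : ℕ) (A : Set Circle1) (δ : ℕ) : Prop :=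
  ∀ y ∈ md d '' A, Set.ncard {x | x ∈ A ∧ md d x = y} = δ

/-- The `λ`-unlinked relation on irrational angles: `θ ~ θ'` iff they lie in the same
connected component of the complement of every `λ`-class. -/
def UnlRel (r : Circle1 → Circle1 → Prop) (θ θ' : Circle1) : Prop :=
  θ ∉ ratC ∧ θ' ∉ ratC ∧
    (θ = θ' ∨ ∀ x ∈ ratC, θ' ∈ connectedComponentIn (relClass r x)ᶜ θ)

/-- `L` is a `λ`-unlinked class. -/
def IsUnlClass (r : Circle1 → Circle1 → Prop) (L : Set Circle1) : Prop :=
  ∃ θ, θ ∉ ratC ∧ L = {θ' | UnlRel r θ θ'}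

/-- The real extension `λ̂`: the smallest equivalence relation containing the closure
of `λ` in `(ℝ/ℤ)²`. -/
def realExt (r : Circle1 → Circle1 → Prop) : Circle1 → Circle1 → Prop :=
  Relation.EqvGen (fun a b => (a, b) ∈ closure {p : Circle1 × Circle1 | r p.1 p.2})

/-- `A` is a class of the real extension `λ̂` of `r`. -/
def IsRealClass (r : Circle1 → Circle1 → Prop) (A : Set Circle1) : Prop :=
  ∃ x, A = {y | realExt r x y}

/-- A Julia critical element: a `λ̂`-class on which `m_d` is not injective. -/
def JuliaCritElem (d : ℕ) (r : Circle1 → Circle1 → Prop) (A : Set Circle1) : Prop :=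
  IsRealClass r A ∧ ¬ Set.InjOn (md d) A

/-- A Fatou critical element: an infinite `λ`-unlinked class on which `m_d` is not
injective (i.e. of degree `> 1`). -/
def FatouCritElem (d : ℕ) (r : Circle1 → Circle1 → Prop) (L : Set Circle1) : Prop :=
  IsUnlClass r L ∧ L.Infinite ∧ ¬ Set.InjOn (md d) L

/-- A critical element of `λ`. -/
def CritElem (d : ℕ) (r : Circle1 → Circle1 → Prop) (C : Set Circle1) : Prop :=
  JuliaCritElem d r C ∨ FatouCritElem d r C


/-- ccw distance in `(0,1]`. -/
def cD (x y : Circle1) : ℝ := (AddCircle.equivIoc (1 : ℝ) 0 (y - x) : ℝ)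

lemma cD_pos (x y : Circle1) : 0 < cD x y :=
  (AddCircle.equivIoc (1 : ℝ) 0 (y - x)).2.1

lemma cD_le (x y : Circle1) : cD x y ≤ 1 := by
  have := (AddCircle.equivIoc (1 : ℝ) 0 (y - x)).2.2
  unfold cD; linarith

lemma cD_coe (x y : Circle1) : x + (cD x y : Circle1) = y := by
  unfold cD; rw [AddCircle.coe_equivIoc]; abel

lemma cD_add {x : Circle1} {r : ℝ} (h0 : 0 < r) (h1 : r ≤ 1) : cD x (x + (r : Circle1)) = r := by
  unfold cD
  rw [add_sub_cancel_left]
  exact AddCircle.equivIoc_coe_of_mem (p := (1:ℝ)) (a := 0) (by simp [h0, h1])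

lemma cD_uniq {x y : Circle1} {r : ℝ} (h0 : 0 < r) (h1 : r ≤ 1) (h : x + (r : Circle1) = y) :
    cD x y = r := by subst h; exact cD_add h0 h1

lemma coe_one_c : ((1 : ℝ) : Circle1) = 0 := AddCircle.coe_period 1

lemma cD_self (x : Circle1) : cD x x = 1 :=
  cD_uniq one_pos le_rfl (by rw [coe_one_c, add_zero])

lemma cD_inj {x y z : Circle1} (h : cD x y = cD x z) : y = z := by
  rw [← cD_coe x y, ← cD_coe x z, h]

lemma cD_eq_one {x y : Circle1} : cD x y = 1 ↔ x = y := by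
  constructor
  · intro h; exact (cD_inj (h.trans (cD_self x).symm)).symm
  · rintro rfl; exact cD_self x

lemma cD_cases (x y z : Circle1) :
    (cD x y + cD y z ≤ 1 ∧ cD x z = cD x y + cD y z) ∨
    (1 < cD x y + cD y z ∧ cD x z = cD x y + cD y z - 1) := by
  have h1 := cD_pos x y; have h2 := cD_pos y z
  have h3 := cD_le x y; have h4 := cD_le y z
  have e : x + ((cD x y + cD y z : ℝ) : Circle1) = z := by
    rw [AddCircle.coe_add, ← add_assoc, cD_coe, cD_coe]
  rcases le_or_gt (cD x y + cD y z) 1 with h | h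
  · exact Or.inl ⟨h, cD_uniq (by linarith) h e⟩
  · refine Or.inr ⟨h, cD_uniq (by linarith) (by linarith) ?_⟩
    rw [AddCircle.coe_sub, coe_one_c, sub_zero]; exact e

lemma cD_sub {x y z : Circle1} (h : cD x y < cD x z) : cD y z = cD x z - cD x y := by
  have := cD_cases x y z
  have h2 := cD_pos y z; have h3 := cD_le y z
  rcases this with h' | h' <;> linarith [h'.1, h'.2]

lemma cD_sub' {x y z : Circle1} (h : cD y z < cD x z) : cD x y = cD x z - cD y z := by
  have := cD_cases x y z
  have h2 := cD_pos x y; have h3 := cD_le x y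
  rcases this with h' | h' <;> linarith [h'.1, h'.2]

lemma cD_symm {x y : Circle1} (h : x ≠ y) : cD x y + cD y x = 1 := by
  have := cD_cases x y x
  rw [cD_self] at this
  have h1 : cD x y ≠ 1 := fun h' => h (cD_eq_one.1 h')
  have h2 := cD_le x y; have h3 := cD_le y x
  rcases this with h' | h'
  · linarith [h'.2]
  · exfalso; apply h1; linarith [h'.2]

lemma cD_lt_one {x y : Circle1} (h : x ≠ y) : cD x y < 1 :=
  lt_of_le_of_ne (cD_le x y) (fun h' => h (cD_eq_one.1 h'))

lemma md_coe (d : ℕ) (x : Circle1) (r : ℝ) : md d (x + (r : Circle1)) = md d x + ((d * r : ℝ) : Circle1) := by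
  unfold md
  rw [smul_add, ← AddCircle.coe_nsmul, nsmul_eq_mul]

lemma coe_nat_c (k : ℕ) : ((k : ℝ) : Circle1) = 0 := by
  have := AddCircle.coe_nsmul (p := (1:ℝ)) (n := k) (x := 1)
  rw [coe_one_c, smul_zero, nsmul_eq_mul, mul_one] at this
  exact this

lemma cD_md {d : ℕ} (hd : 2 ≤ d) (x y : Circle1) :
    ∃ k : ℕ, d * cD x y = k + cD (md d x) (md d y) := by
  have hp := cD_pos x y
  have hd' : (2:ℝ) ≤ d := by exact_mod_cast hd
  have hpos : 0 < d * cD x y := by positivity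
  set r := d * cD x y with hr
  have hc : 1 ≤ ⌈r⌉₊ := Nat.one_le_iff_ne_zero.2 (by simpa using hpos)
  refine ⟨⌈r⌉₊ - 1, ?_⟩
  have e : ((⌈r⌉₊ - 1 : ℕ) : ℝ) = (⌈r⌉₊ : ℝ) - 1 := by push_cast [hc]; ring
  have h1 := Nat.le_ceil r
  have h2 := Nat.ceil_lt_add_one hpos.le
  have : cD (md d x) (md d y) = r - ((⌈r⌉₊ - 1 : ℕ) : ℝ) := by
    apply cD_uniq
    · rw [e]; linarith
    · rw [e]; linarith
    · rw [AddCircle.coe_sub, coe_nat_c, sub_zero, hr, ← md_coe, cD_coe]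
  linarith

lemma cD_md_le {d : ℕ} (hd : 2 ≤ d) (x y : Circle1) : cD (md d x) (md d y) ≤ d * cD x y := by
  obtain ⟨k, hk⟩ := cD_md hd x y
  have : (0:ℝ) ≤ k := k.cast_nonneg
  linarith

lemma cD_md_eq {d : ℕ} (hd : 2 ≤ d) {x y : Circle1} (h : d * cD x y ≤ 1) :
    cD (md d x) (md d y) = d * cD x y := by
  have hd' : (2:ℝ) ≤ d := by exact_mod_cast hd
  have hp := cD_pos x y
  apply cD_uniq (by positivity) h
  rw [← md_coe, cD_coe]

/-- lift of `c` ccw from `x`. -/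
def lft (d : ℕ) (x c : Circle1) : Circle1 := x + ((cD (md d x) c / d : ℝ) : Circle1)

lemma md_lft {d : ℕ} (hd : 2 ≤ d) (x c : Circle1) : md d (lft d x c) = c := by
  have hd' : (2:ℝ) ≤ d := by exact_mod_cast hd
  unfold lft
  rw [md_coe, mul_div_cancel₀ _ (by positivity), cD_coe]

lemma cD_lft {d : ℕ} (hd : 2 ≤ d) (x c : Circle1) : cD x (lft d x c) = cD (md d x) c / d := by
  have hd' : (2:ℝ) ≤ d := by exact_mod_cast hd
  apply cD_add
  · have := cD_pos (md d x) c; positivity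
  · rw [div_le_one (by positivity)]; linarith [cD_le (md d x) c]

lemma arc_md_free {d : ℕ} (hd : 2 ≤ d) {P : Set Circle1} {x y : Circle1}
    (h : ∀ p, md d p ∈ P → ¬ cD x p < cD x y) : ∀ p ∈ P, ¬ cD (md d x) p < cD (md d x) (md d y) := by
  intro p hp hlt
  have hd' : (2:ℝ) ≤ d := by exact_mod_cast hd
  apply h (lft d x p) (by rwa [md_lft hd])
  rw [cD_lft hd, div_lt_iff₀ (by positivity)]
  have := cD_md_le hd x y
  linarith

/-! rational points -/

lemma ratC_coe {r : ℝ} : (r : Circle1) ∈ ratC ↔ ∃ q : ℚ, r = q := by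
  constructor
  · rintro ⟨q, hq⟩
    have h : ((r - q : ℝ) : Circle1) = 0 := by rw [AddCircle.coe_sub, hq, sub_self]
    rw [AddCircle.coe_eq_zero_iff] at h
    obtain ⟨n, hn⟩ := h
    refine ⟨q + n, ?_⟩
    push_cast
    simp at hn
    linarith
  · rintro ⟨q, rfl⟩; exact ⟨q, rfl⟩

lemma ratC_md {d : ℕ} (hd : 2 ≤ d) {x : Circle1} : md d x ∈ ratC ↔ x ∈ ratC := by
  have hd' : (2:ℝ) ≤ d := by exact_mod_cast hd
  induction x using QuotientAddGroup.induction_on with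
  | H r =>
    have : md d (r : Circle1) = ((d * r : ℝ) : Circle1) := by
      unfold md; rw [← AddCircle.coe_nsmul, nsmul_eq_mul]
    change md d (r : Circle1) ∈ ratC ↔ (r : Circle1) ∈ ratC
    rw [this, ratC_coe, ratC_coe]
    constructor
    · rintro ⟨q, hq⟩
      refine ⟨q / d, ?_⟩
      push_cast; rw [← hq]; field_simp
    · rintro ⟨q, hq⟩
      exact ⟨d * q, by push_cast; rw [hq]⟩

lemma ratC_add_irr {x : Circle1} (hx : x ∈ ratC) {r : ℝ} (hr : Irrational r) :
    x + (r : Circle1) ∉ ratC := by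
  obtain ⟨q, rfl⟩ := hx
  rw [← AddCircle.coe_add, ratC_coe]
  rintro ⟨q', h⟩
  exact hr ⟨q' - q, by push_cast; linarith⟩

lemma ratC_countable : (ratC : Set Circle1).Countable := by
  have : (ratC : Set Circle1) = Set.range (fun q : ℚ => ((q : ℝ) : Circle1)) := by
    ext x; simp [ratC, eq_comm]
  rw [this]; exact Set.countable_range _

/-! topology -/

lemma nhds_cD (x : Circle1) {e : ℝ} (he : 0 < e) :
    ∀ᶠ y in nhds x, y = x ∨ cD x y < e ∨ cD y x < e := by
  have ho : IsOpenMap (fun r : ℝ => x + (r : Circle1)) :=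
    (Homeomorph.addLeft x).isOpenMap.comp QuotientAddGroup.isOpenMap_coe
  set e' := min e 1 with he'
  have hp : 0 < e' := lt_min he one_pos
  have h1 : e' ≤ e := min_le_left _ _
  have h2 : e' ≤ 1 := min_le_right _ _
  have hi := ho _ (isOpen_Ioo (a := -e') (b := e'))
  have hm : x ∈ (fun r : ℝ => x + (r : Circle1)) '' Ioo (-e') e' :=
    ⟨0, ⟨by linarith, hp⟩, by simp⟩
  filter_upwards [hi.mem_nhds hm]
  rintro _ ⟨r, ⟨hr1, hr2⟩, rfl⟩
  rcases lt_trichotomy r 0 with h | h | h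
  · right; right
    have : cD (x + (r : Circle1)) x = -r :=
      cD_uniq (by linarith) (by linarith) (by rw [AddCircle.coe_neg]; abel)
    rw [this]; linarith
  · left; simp [h]
  · right; left
    change cD x (x + (r : Circle1)) < e
    rw [cD_add h (by linarith)]; linarith

lemma nhds_cD' {x : Circle1} {U : Set Circle1} (hU : U ∈ nhds x) :
    ∃ e > 0, ∀ y, (cD x y < e ∨ cD y x < e) → y ∈ U := by
  have hc : Continuous (fun r : ℝ => x + (r : Circle1)) :=
    continuous_const.add (AddCircle.continuous_mk' 1)
  have : (fun r : ℝ => x + (r : Circle1)) ⁻¹' U ∈ nhds (0:ℝ) :=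
    hc.continuousAt.preimage_mem_nhds (by simpa using hU)
  obtain ⟨e, he, hb⟩ := Metric.mem_nhds_iff.1 this
  refine ⟨e, he, fun y hy => ?_⟩
  rcases hy with hy | hy
  · have : cD x y ∈ Metric.ball (0:ℝ) e := by
      rw [Metric.mem_ball, Real.dist_eq, sub_zero, abs_of_pos (cD_pos _ _)]; exact hy
    have := hb this
    simpa [cD_coe] using this
  · have : -cD y x ∈ Metric.ball (0:ℝ) e := by
      rw [Metric.mem_ball, Real.dist_eq, sub_zero, abs_neg, abs_of_pos (cD_pos _ _)]; exact hy
    have := hb this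
    have e2 : x + ((-cD y x : ℝ) : Circle1) = y := by
      rw [AddCircle.coe_neg, ← sub_eq_add_neg, sub_eq_iff_eq_add, cD_coe]
    rw [Set.mem_preimage, e2] at this; exact this

/-! finite-set helper lemmas -/

lemma fin_lb {P : Set Circle1} (hP : P.Finite) (f : Circle1 → ℝ) (hf : ∀ p ∈ P, 0 < f p) :
    ∃ e > 0, ∀ p ∈ P, e < f p := by
  induction P, hP using Set.Finite.induction_on with
  | empty => exact ⟨1, one_pos, by simp⟩
  | @insert a s _ _ ih =>
    obtain ⟨e, he, h⟩ := ih (fun p hp => hf p (mem_insert_of_mem _ hp))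
    have ha := hf a (mem_insert _ _)
    refine ⟨min e (f a / 2), lt_min he (by linarith), ?_⟩
    rintro p (rfl | hp)
    · exact lt_of_le_of_lt (min_le_right _ _) (by linarith)
    · exact lt_of_le_of_lt (min_le_left _ _) (h p hp)

lemma exists_plus {P : Set Circle1} (hP : P.Finite) {u : Circle1} (hu : u ∈ ratC) :
    ∃ s, s ∉ ratC ∧ ∀ p ∈ P, cD u s < cD u p := by
  obtain ⟨e, he, h⟩ := fin_lb hP (cD u) (fun p _ => cD_pos _ _)
  obtain ⟨r, hr, h1, h2⟩ := exists_irrational_btwn (show (0:ℝ) < min e 1 from lt_min he one_pos)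
  refine ⟨u + (r : Circle1), ratC_add_irr hu hr, fun p hp => ?_⟩
  rw [cD_add h1 (h2.le.trans (min_le_right _ _))]
  exact (h2.trans_le (min_le_left _ _)).trans (h p hp)

lemma exists_minus {P : Set Circle1} (hP : P.Finite) {u : Circle1} (hu : u ∈ ratC) :
    ∃ s, s ∉ ratC ∧ ∀ p ∈ P, cD s u < cD p u := by
  obtain ⟨e, he, h⟩ := fin_lb hP (fun p => cD p u) (fun p _ => cD_pos _ _)
  obtain ⟨r, hr, h1, h2⟩ := exists_irrational_btwn (show (0:ℝ) < min e 1 from lt_min he one_pos)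
  refine ⟨u + ((-r : ℝ) : Circle1), ratC_add_irr hu hr.neg, fun p hp => ?_⟩
  rw [cD_uniq (r := r) h1 (h2.le.trans (min_le_right _ _)) (by rw [AddCircle.coe_neg]; abel)]
  exact (h2.trans_le (min_le_left _ _)).trans (h p hp)

/-! the relation of being in the same component -/

def Same (A : Set Circle1) (x y : Circle1) : Prop := x ∉ A ∧ y ∈ connectedComponentIn Aᶜ x

lemma Same.left {A : Set Circle1} {x y : Circle1} (h : Same A x y) : x ∉ A := h.1
lemma Same.right {A : Set Circle1} {x y : Circle1} (h : Same A x y) : y ∉ A :=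
  connectedComponentIn_subset _ _ h.2
lemma Same.refl {A : Set Circle1} {x : Circle1} (h : x ∉ A) : Same A x x :=
  ⟨h, mem_connectedComponentIn h⟩
lemma Same.symm {A : Set Circle1} {x y : Circle1} (h : Same A x y) : Same A y x :=
  ⟨h.right, by rw [← connectedComponentIn_eq h.2]; exact mem_connectedComponentIn h.1⟩
lemma Same.trans {A : Set Circle1} {x y z : Circle1} (h : Same A x y) (h' : Same A y z) : Same A x z :=
  ⟨h.1, by rw [connectedComponentIn_eq h.2]; exact h'.2⟩

lemma same_of_arc {A : Set Circle1} {x y : Circle1} (hx : x ∉ A) (hy : y ∉ A)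
    (h : ∀ t ∈ A, ¬ cD x t < cD x y) : Same A x y := by
  refine ⟨hx, ?_⟩
  have hc : Continuous (fun r : ℝ => x + (r : Circle1)) :=
    continuous_const.add (AddCircle.continuous_mk' 1)
  have hpre : IsPreconnected ((fun r : ℝ => x + (r : Circle1)) '' Icc 0 (cD x y)) :=
    isPreconnected_Icc.image _ hc.continuousOn
  have hp := cD_pos x y
  refine hpre.subset_connectedComponentIn ⟨0, ⟨le_rfl, hp.le⟩, by simp⟩ ?_
    ⟨cD x y, ⟨hp.le, le_rfl⟩, cD_coe x y⟩
  rintro _ ⟨r, ⟨h0, h1⟩, rfl⟩ hA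
  rcases h0.eq_or_lt with rfl | h0
  · apply hx; simpa using hA
  rcases h1.eq_or_lt with rfl | h1
  · apply hy; simpa [cD_coe] using hA
  · apply h _ hA
    change cD x (x + (r : Circle1)) < _
    rw [cD_add h0 (by linarith [cD_le x y])]; exact h1

lemma isOpen_arc (u v : Circle1) : IsOpen {t | cD u t < cD u v} := by
  have ho : IsOpenMap (fun r : ℝ => u + (r : Circle1)) :=
    (Homeomorph.addLeft u).isOpenMap.comp QuotientAddGroup.isOpenMap_coe
  convert ho _ (isOpen_Ioo (a := 0) (b := cD u v)) using 1
  ext t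
  constructor
  · intro ht; exact ⟨cD u t, ⟨cD_pos _ _, ht⟩, cD_coe _ _⟩
  · rintro ⟨r, ⟨h0, h1⟩, rfl⟩
    change cD u (u + (r : Circle1)) < _
    rw [cD_add h0 (by linarith [cD_le u v])]; exact h1

lemma not_same {A : Set Circle1} {x y a b : Circle1} (ha : a ∈ A) (hb : b ∈ A)
    (h1 : cD x a < cD x y) (h2 : cD x y < cD x b) : ¬ Same A x y := by
  intro hs
  have hpre := isPreconnected_connectedComponentIn (x := x) (F := Aᶜ)
  have hxb : x ≠ b := fun h => hs.1 (h ▸ hb)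
  have hab : a ≠ b := by rintro rfl; linarith
  have e1 := cD_sub h1
  have e2 := cD_sub h2
  have e3 := cD_sub (h1.trans h2)
  have e4 := cD_symm hab
  have e5 := cD_symm hxb
  have e6 := cD_cases b x a
  have e7 := cD_cases b a y
  have := hpre {t | cD a t < cD a b} {t | cD b t < cD b a} (isOpen_arc _ _) (isOpen_arc _ _)
    (fun t ht => by
      have htA : t ∉ A := connectedComponentIn_subset _ _ ht
      have hta : t ≠ a := fun h => htA (h ▸ ha)
      have htb : t ≠ b := fun h => htA (h ▸ hb)
      have f1 := cD_cases a t b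
      by_contra hcon
      simp only [mem_union, Set.mem_ofPred_eq, not_or, not_lt] at hcon
      have f2 := cD_symm htb
      have f3 := cD_symm htb.symm
      have f4 := cD_cases b a t
      have f5 := cD_lt_one hta
      have f6 := cD_lt_one htb
      have f7 := cD_lt_one hta.symm
      have f8 := cD_lt_one htb.symm
      have f9 := cD_pos b t
      have f10 : cD a t ≠ cD a b := fun h => htb (cD_inj h)
      have f11 : cD a b < cD a t := lt_of_le_of_ne hcon.1 f10.symm
      have f12 := cD_sub f11
      have f13 := cD_pos a t
      rcases f4 with f4 | f4 <;> linarith [f4.1, f4.2])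
    ⟨y, hs.2, by
      simp only [Set.mem_ofPred_eq]; linarith⟩
    ⟨x, mem_connectedComponentIn hs.1, by
      simp only [Set.mem_ofPred_eq]
      have := cD_pos x a; have := cD_pos b x
      have := cD_le b a
      rcases e6 with e6 | e6 <;> linarith [e6.1, e6.2]⟩
  obtain ⟨t, _, ht1, ht2⟩ := this
  simp only [Set.mem_ofPred_eq] at ht1 ht2
  have := cD_sub ht1
  have := cD_cases b a t
  have := cD_pos a t
  have := cD_pos b t
  have f1 : cD t b + cD b t = 1 := cD_symm (by rintro rfl; linarith [cD_self t])
  have := cD_pos b a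
  rcases cD_cases b a t with e6 | e6 <;> linarith [e6.1, e6.2]

lemma same_nhds {A : Set Circle1} (hA : A.Finite) {x : Circle1} (hx : x ∉ A) :
    ∀ᶠ y in nhds x, Same A x y := by
  obtain ⟨e, he, h⟩ := fin_lb hA (cD x) (fun p _ => cD_pos _ _)
  obtain ⟨e', he', h'⟩ := fin_lb hA (fun p => cD p x) (fun p _ => cD_pos _ _)
  filter_upwards [nhds_cD x (lt_min he he'), hA.isClosed.isOpen_compl.mem_nhds hx] with y hy hyA
  rcases hy with rfl | hy | hy
  · exact Same.refl hx
  · refine same_of_arc hx hyA fun t ht hlt => ?_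
    have := h t ht; have := min_le_left e e'; linarith
  · refine (same_of_arc hyA hx fun t ht hlt => ?_).symm
    have := h' t ht; have := min_le_right e e'; have := cD_sub hlt
    have := cD_pos y t
    linarith

/-- a finite family of finite nonempty pairwise unlinked sets of rational angles -/
structure GoodFam (Fm : Finset (Set Circle1)) : Prop where
  fin : ∀ A ∈ Fm, A.Finite
  ne : ∀ A ∈ Fm, A.Nonempty
  rat : ∀ A ∈ Fm, A ⊆ ratC
  unl : ∀ A ∈ Fm, ∀ A' ∈ Fm, A ≠ A' → ∀ a ∈ A, ∀ b ∈ A, Same A' a b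

def PU (Fm : Finset (Set Circle1)) : Set Circle1 := {p | ∃ A ∈ Fm, p ∈ A}

def Eqv (Fm : Finset (Set Circle1)) (x y : Circle1) : Prop := ∀ A ∈ Fm, Same A x y

lemma GoodFam.finPU {Fm : Finset (Set Circle1)} (h : GoodFam Fm) : (PU Fm).Finite := by
  have : PU Fm = ⋃ A ∈ (Fm : Set (Set Circle1)), A := by ext; simp [PU]
  rw [this]
  exact Set.Finite.biUnion Fm.finite_toSet (fun A hA => h.fin A hA)

lemma GoodFam.ratPU {Fm : Finset (Set Circle1)} (h : GoodFam Fm) {p : Circle1} (hp : p ∈ PU Fm) : p ∈ ratC := by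
  obtain ⟨A, hA, hp⟩ := hp; exact h.rat A hA hp

lemma GoodFam.nmem {Fm : Finset (Set Circle1)} (h : GoodFam Fm) {x : Circle1} (hx : x ∉ ratC)
    {A : Set Circle1} (hA : A ∈ Fm) : x ∉ A := fun hxA => hx (h.rat A hA hxA)

lemma Eqv.refl {Fm : Finset (Set Circle1)} (h : GoodFam Fm) {x : Circle1} (hx : x ∉ ratC) : Eqv Fm x x :=
  fun _ hA => Same.refl (h.nmem hx hA)
lemma Eqv.symm {Fm : Finset (Set Circle1)} {x y : Circle1} (h : Eqv Fm x y) : Eqv Fm y x :=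
  fun A hA => (h A hA).symm
lemma Eqv.trans {Fm : Finset (Set Circle1)} {x y z : Circle1} (h : Eqv Fm x y) (h' : Eqv Fm y z) : Eqv Fm x z :=
  fun A hA => (h A hA).trans (h' A hA)
lemma Eqv.mono {Fm Fm' : Finset (Set Circle1)} (hs : Fm ⊆ Fm') {x y : Circle1} (h : Eqv Fm' x y) : Eqv Fm x y :=
  fun A hA => h A (hs hA)

lemma eqv_arc {Fm : Finset (Set Circle1)} (h : GoodFam Fm) {x y : Circle1} (hx : x ∉ ratC) (hy : y ∉ ratC)
    (hf : ∀ p ∈ PU Fm, ¬ cD x p < cD x y) : Eqv Fm x y :=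
  fun A hA => same_of_arc (h.nmem hx hA) (h.nmem hy hA) (fun t ht => hf t ⟨A, hA, ht⟩)

lemma eqv_adj {Fm : Finset (Set Circle1)} (h : GoodFam Fm) {A : Set Circle1} (hA : A ∈ Fm) {u v s s' : Circle1}
    (hu : u ∈ A) (hv : v ∈ A) (huv : ∀ a ∈ A, cD u v ≤ cD u a) (hs : s ∉ ratC) (hs' : s' ∉ ratC)
    (h1 : ∀ p ∈ PU Fm, cD u s < cD u p) (h2 : ∀ p ∈ PU Fm, cD s' v < cD p v) : Eqv Fm s' s := by
  intro A' hA'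
  by_cases hAA : A = A'
  · subst hAA
    have k1 := h1 v ⟨A, hA, hv⟩
    have k2 := h2 u ⟨A, hA, hu⟩
    have k3 := cD_sub' k2
    have k4 := cD_pos s' v
    rcases lt_trichotomy (cD u s) (cD u s') with hlt | heq | hlt
    · refine (same_of_arc (h.nmem hs hA) (h.nmem hs' hA) fun t ht hc => ?_).symm
      have := huv t ht
      have := cD_sub hlt
      have := cD_cases u s t
      rcases cD_cases u s t with e | e <;> linarith [e.1, e.2, cD_le u s']
    · rw [cD_inj heq]; exact Same.refl (h.nmem hs' hA)
    · refine same_of_arc (h.nmem hs' hA) (h.nmem hs hA) fun t ht hc => ?_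
      have := huv t ht
      have := cD_sub hlt
      rcases cD_cases u s' t with e | e <;> linarith [e.1, e.2, cD_le u s]
  · have k := h.unl A hA A' hA' hAA u hu v hv
    have a1 : Same A' u s := same_of_arc k.left (h.nmem hs hA') fun t ht hc => by
      have := h1 t ⟨A', hA', ht⟩; linarith
    have a2 : Same A' s' v := same_of_arc (h.nmem hs' hA') k.right fun t ht hc => by
      have := h2 t ⟨A', hA', ht⟩
      have := cD_sub hc
      linarith [cD_pos s' t]
    exact a2.trans (k.symm.trans a1)

lemma exists_pred {A : Set Circle1} (hf : A.Finite) {v : Circle1} (hv : v ∈ A) :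
    ∃ u ∈ A, ∀ a ∈ A, cD u v ≤ cD u a := by
  obtain ⟨u, hu, hm⟩ := Set.exists_min_image A (fun a => cD a v) hf ⟨v, hv⟩
  refine ⟨u, hu, fun a ha => ?_⟩
  by_contra hlt
  push Not at hlt
  have := cD_sub hlt
  have := hm a ha
  linarith [cD_pos u a]

lemma walk {Fm : Finset (Set Circle1)} (h : GoodFam Fm) (r : Circle1 → Circle1 → Prop)
    (ht : ∀ x y z, r x y → r y z → r x z)
    (hi : ∀ x y, x ∉ ratC → y ∉ ratC → (∀ p ∈ PU Fm, ¬ cD x p < cD x y) → r x y)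
    (hii : ∀ A ∈ Fm, ∀ u ∈ A, ∀ v ∈ A, (∀ a ∈ A, cD u v ≤ cD u a) → ∀ s s', s ∉ ratC → s' ∉ ratC →
      (∀ p ∈ PU Fm, cD u s < cD u p) → (∀ p ∈ PU Fm, cD s' v < cD p v) → r s' s) :
    ∀ x y, x ∉ ratC → y ∉ ratC → x ≠ y → Eqv Fm x y → r x y := by
  suffices H : ∀ n : ℕ, ∀ x y, x ∉ ratC → y ∉ ratC → x ≠ y → Eqv Fm x y →
      (PU Fm ∩ {t | cD x t < cD x y}).ncard = n → r x y from
    fun x y hx hy hxy he => H _ x y hx hy hxy he rfl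
  intro n
  induction n using Nat.strong_induction_on with
  | _ n ih =>
  intro x y hx hy hxy he hn
  by_cases hempty : ∀ p ∈ PU Fm, ¬ cD x p < cD x y
  · exact hi x y hx hy hempty
  push Not at hempty
  have hfin : (PU Fm ∩ {t | cD x t < cD x y}).Finite := h.finPU.inter_of_left _
  obtain ⟨v, ⟨⟨A, hA, hvA⟩, hvy⟩, hmin⟩ := Set.exists_min_image _ (cD x) hfin
    (by obtain ⟨p, hp, hp'⟩ := hempty; exact ⟨p, hp, hp'⟩)
  simp only [Set.mem_ofPred_eq] at hvy
  obtain ⟨u, hu, huv⟩ := exists_pred (h.fin A hA) hvA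
  have hvr := h.rat A hA hvA
  have hur := h.rat A hA hu
  obtain ⟨s', hs', hs'P⟩ := exists_minus (P := PU Fm ∪ {x}) (h.finPU.union (finite_singleton _)) hvr
  obtain ⟨s, hs, hsP⟩ := exists_plus (P := PU Fm ∪ {y}) (h.finPU.union (finite_singleton _)) hur
  have hall : ∀ a ∈ A, cD x a < cD x y := by
    intro a ha
    by_contra hc
    push Not at hc
    rcases hc.eq_or_lt with e | hc
    · exact h.nmem hy hA (cD_inj e ▸ ha)
    · exact not_same hvA ha hvy hc (he A hA)
  have k1 := hs'P x (Or.inr rfl)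
  have k2 := cD_sub' k1
  have k0 := cD_pos s' v
  have k3 : ∀ p ∈ PU Fm, ¬ cD x p < cD x s' := by
    intro p hp hlt
    have := hmin p ⟨hp, by simp only [Set.mem_ofPred_eq]; linarith⟩
    linarith
  have r1 : r x s' := hi x s' hx hs' k3
  have e1 : Eqv Fm x s' := eqv_arc h hx hs' k3
  have e2 : Eqv Fm s' s := eqv_adj h hA hu hvA huv hs hs'
    (fun p hp => hsP p (Or.inl hp)) (fun p hp => hs'P p (Or.inl hp))
  have r2 : r s' s := hii A hA u hu v hvA huv s s' hs hs'
    (fun p hp => hsP p (Or.inl hp)) (fun p hp => hs'P p (Or.inl hp))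
  refine ht _ _ _ (ht _ _ _ r1 r2) ?_
  have k5 := hsP y (Or.inr rfl)
  have hsy : s ≠ y := by rintro rfl; exact lt_irrefl _ k5
  have k6 := hall u hu
  have k7 := cD_sub k6
  have k8 := cD_sub k5
  have hsub : ∀ t, cD s t < cD s y → cD u t < cD u y ∧ cD x t < cD x y := by
    intro t htt
    have a1 : cD u t < cD u y := by
      rcases cD_cases u s t with e | e <;> linarith [e.1, e.2, cD_le u y]
    refine ⟨a1, ?_⟩
    rcases cD_cases x u t with e | e <;> linarith [e.1, e.2, cD_le x y]
  have hv' : ¬ cD u v < cD u y := by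
    intro hc
    have m := hmin u ⟨⟨A, hA, hu⟩, k6⟩
    rcases m.eq_or_lt with e | hlt
    · have := cD_inj e; subst this
      rw [cD_self] at hc; linarith [cD_le v y]
    · have := cD_sub hlt
      have hne : u ≠ v := by rintro rfl; exact lt_irrefl _ hlt
      have := cD_symm hne
      linarith [cD_le x y, cD_pos x v]
  refine ih _ ?_ s y hs hy hsy ((e1.trans e2).symm.trans he) rfl
  rw [← hn]
  refine Set.ncard_lt_ncard ⟨fun t ht' => ⟨ht'.1, (hsub t ht'.2).2⟩, fun hc => ?_⟩ hfin
  have := hc (show v ∈ _ from ⟨⟨A, hA, hvA⟩, hvy⟩)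
  exact hv' (hsub v this.2).1

/-- transversal count -/
lemma region_count {Fm : Finset (Set Circle1)} (h : GoodFam Fm) :
    ∃ Y : Finset Circle1, (∀ y ∈ Y, y ∉ ratC) ∧ (∀ y ∈ Y, ∀ z ∈ Y, Eqv Fm y z → y = z) ∧
      (∀ x, x ∉ ratC → ∃ y ∈ Y, Eqv Fm x y) ∧ Y.card = 1 + ∑ A ∈ Fm, (A.ncard - 1) := by
  classical
  obtain ⟨x0, hx0, -⟩ := exists_plus (P := ∅) finite_empty (u := 0) ⟨0, by simp⟩
  -- last element of each class
  have hlast : ∀ A : Set Circle1, ∃ l, A ∈ Fm → l ∈ A ∧ ∀ a ∈ A, cD x0 a ≤ cD x0 l := by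
    intro A
    by_cases hA : A ∈ Fm
    · obtain ⟨l, hl, hm⟩ := Set.exists_max_image A (cD x0) (h.fin A hA) (h.ne A hA)
      exact ⟨l, fun _ => ⟨hl, hm⟩⟩
    · exact ⟨x0, fun h => absurd h hA⟩
  choose lst hlst using hlast
  have hplus : ∀ p : Circle1, ∃ s, p ∈ PU Fm → s ∉ ratC ∧ ∀ q ∈ PU Fm ∪ {x0}, cD p s < cD p q := by
    intro p
    by_cases hp : p ∈ PU Fm
    · obtain ⟨s, hs, hsP⟩ := exists_plus (P := PU Fm ∪ {x0}) (h.finPU.union (finite_singleton _)) (h.ratPU hp)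
      exact ⟨s, fun _ => ⟨hs, hsP⟩⟩
    · exact ⟨x0, fun h => absurd h hp⟩
  choose pl hpl using hplus
  have hdisj : ∀ A ∈ Fm, ∀ A' ∈ Fm, ∀ a, a ∈ A → a ∈ A' → A = A' := by
    intro A hA A' hA' a ha ha'
    by_contra hne
    exact (h.unl A hA A' hA' hne a ha a ha).1 ha'
  let NLs : Set Circle1 → Finset Circle1 := fun A =>
    if hA : A ∈ Fm then (h.fin A hA).toFinset.erase (lst A) else ∅
  have memNLs : ∀ A ∈ Fm, ∀ p, p ∈ NLs A ↔ p ≠ lst A ∧ p ∈ A := by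
    intro A hA p; simp [NLs, hA]
  let NL : Finset Circle1 := Fm.biUnion NLs
  have memNL : ∀ p, p ∈ NL ↔ ∃ A ∈ Fm, p ≠ lst A ∧ p ∈ A := by
    intro p; simp only [NL, Finset.mem_biUnion]
    constructor
    · rintro ⟨A, hA, hp⟩; exact ⟨A, hA, (memNLs A hA p).1 hp⟩
    · rintro ⟨A, hA, hp⟩; exact ⟨A, hA, (memNLs A hA p).2 hp⟩
  have cardNL : NL.card = ∑ A ∈ Fm, (A.ncard - 1) := by
    rw [Finset.card_biUnion]
    · refine Finset.sum_congr rfl fun A hA => ?_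
      simp only [NLs, hA, dif_pos]
      rw [Finset.card_erase_of_mem (by simpa using (hlst A hA).1), Set.ncard_eq_toFinset_card A (h.fin A hA)]
    · intro A hA A' hA' hne
      rw [Function.onFun, Finset.disjoint_left]
      intro p hp hp'
      exact hne (hdisj A hA A' hA' p ((memNLs A hA p).1 hp).2 ((memNLs A' hA' p).1 hp').2)
  have NLpu : ∀ p ∈ NL, p ∈ PU Fm := by
    intro p hp; obtain ⟨A, hA, -, hp⟩ := (memNL p).1 hp; exact ⟨A, hA, hp⟩
  have plx : ∀ p ∈ PU Fm, cD x0 (pl p) = cD x0 p + cD p (pl p) := by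
    intro p hp
    have := (hpl p hp).2 x0 (Or.inr rfl)
    have hne : x0 ≠ p := fun e => hx0 (e ▸ h.ratPU hp)
    have := cD_symm hne
    rcases cD_cases x0 p (pl p) with e | e
    · exact e.2
    · linarith [e.1]
  -- separation
  have sep0 : ∀ p ∈ NL, ¬ Eqv Fm x0 (pl p) := by
    intro p hp he
    obtain ⟨A, hA, hpl', hpA⟩ := (memNL p).1 hp
    have hpu := NLpu p hp
    have e := plx p hpu
    have hl := hlst A hA
    have hlt : cD x0 p < cD x0 (lst A) := lt_of_le_of_ne (hl.2 p hpA) (fun e => hpl' (cD_inj e))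
    have := cD_sub hlt
    have := (hpl p hpu).2 (lst A) (Or.inl ⟨A, hA, hl.1⟩)
    exact not_same hpA hl.1 (x := x0) (y := pl p) (by linarith [cD_pos p (pl p)]) (by linarith) (he A hA)
  have sep1 : ∀ p ∈ NL, ∀ q ∈ NL, cD x0 p < cD x0 q → ¬ Eqv Fm (pl p) (pl q) := by
    intro p hp q hq hlt he
    obtain ⟨A, hA, hpl', hqA⟩ := (memNL q).1 hq
    have hpu := NLpu p hp
    have hqu := NLpu q hq
    have e := plx p hpu
    have e' := plx q hqu
    have hl := hlst A hA
    have hlt' : cD x0 q < cD x0 (lst A) := lt_of_le_of_ne (hl.2 q hqA) (fun e => hpl' (cD_inj e))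
    have := cD_sub hlt'
    have := cD_sub hlt
    have := (hpl q hqu).2 (lst A) (Or.inl ⟨A, hA, hl.1⟩)
    have := (hpl p hpu).2 q (Or.inl hqu)
    have o1 : cD x0 (pl p) < cD x0 q := by linarith
    have o2 : cD x0 q < cD x0 (pl q) := by linarith [cD_pos q (pl q)]
    have o3 : cD x0 (pl q) < cD x0 (lst A) := by linarith
    have := cD_sub o1
    have := cD_sub (o1.trans o2)
    have := cD_sub ((o1.trans o2).trans o3)
    exact not_same hqA hl.1 (x := pl p) (y := pl q) (by linarith) (by linarith) (he A hA)
  have inj : ∀ p ∈ NL, ∀ q ∈ NL, Eqv Fm (pl p) (pl q) → p = q := by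
    intro p hp q hq he
    rcases lt_trichotomy (cD x0 p) (cD x0 q) with hlt | heq | hlt
    · exact absurd he (sep1 p hp q hq hlt)
    · exact cD_inj heq
    · exact absurd he.symm (sep1 q hq p hp hlt)
  have plirr : ∀ p ∈ NL, pl p ∉ ratC := fun p hp => (hpl p (NLpu p hp)).1
  refine ⟨insert x0 (NL.image pl), ?_, ?_, ?_, ?_⟩
  · intro y hy
    rcases Finset.mem_insert.1 hy with rfl | hy
    · exact hx0
    · obtain ⟨p, hp, rfl⟩ := Finset.mem_image.1 hy; exact plirr p hp
  · intro y hy z hz he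
    rcases Finset.mem_insert.1 hy with rfl | hy
    · rcases Finset.mem_insert.1 hz with rfl | hz
      · rfl
      · obtain ⟨p, hp, rfl⟩ := Finset.mem_image.1 hz; exact absurd he (sep0 p hp)
    · obtain ⟨q, hq, rfl⟩ := Finset.mem_image.1 hy
      rcases Finset.mem_insert.1 hz with rfl | hz
      · exact absurd he.symm (sep0 q hq)
      · obtain ⟨p, hp, rfl⟩ := Finset.mem_image.1 hz; rw [inj q hq p hp he]
  · suffices H : ∀ n : ℕ, ∀ x, x ∉ ratC → (PU Fm ∩ {t | cD x0 t < cD x0 x}).ncard = n →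
        ∃ y ∈ insert x0 (NL.image pl), Eqv Fm x y from fun x hx => H _ x hx rfl
    intro n
    induction n using Nat.strong_induction_on with
    | _ n ih =>
    intro x hx hn
    by_cases hempty : ∀ p ∈ PU Fm, ¬ cD x0 p < cD x0 x
    · exact ⟨x0, Finset.mem_insert_self _ _, (eqv_arc h hx0 hx hempty).symm⟩
    push Not at hempty
    have hfin : (PU Fm ∩ {t | cD x0 t < cD x0 x}).Finite := h.finPU.inter_of_left _
    obtain ⟨p, ⟨hpu, hpx⟩, hmax⟩ := Set.exists_max_image _ (cD x0) hfin
      (by obtain ⟨p, hp, hp'⟩ := hempty; exact ⟨p, hp, hp'⟩)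
    simp only [Set.mem_ofPred_eq] at hpx
    have e := plx p hpu
    have hxp : Eqv Fm x (pl p) := by
      have hp0 := hpl p hpu
      have hpx' := cD_sub hpx
      rcases lt_trichotomy (cD x0 (pl p)) (cD x0 x) with hlt | heq | hlt
      · refine (eqv_arc h hp0.1 hx fun q hq hc => ?_).symm
        have f1 := cD_sub hlt
        have f2 : cD x0 q = cD x0 (pl p) + cD (pl p) q := by
          rcases cD_cases x0 (pl p) q with f | f
          · exact f.2
          · linarith [f.1, cD_le x0 x]
        have := hmax q ⟨hq, by simp only [Set.mem_ofPred_eq]; linarith⟩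
        linarith [cD_pos (pl p) q, cD_pos p (pl p)]
      · rw [cD_inj heq]; exact Eqv.refl h hx
      · refine (eqv_arc h hx hp0.1 fun q hq hc => ?_)
        have f1 := cD_sub hlt
        have f2 := cD_sub hpx
        have f3 := hp0.2 q (Or.inl hq)
        have f4 : cD p q = cD p x + cD x q := by
          rcases cD_cases p x q with f | f
          · exact f.2
          · linarith [f.1, cD_le p (pl p)]
        linarith
    by_cases hpNL : p ∈ NL
    · exact ⟨pl p, Finset.mem_insert_of_mem (Finset.mem_image_of_mem _ hpNL), hxp⟩
    obtain ⟨A, hA, hpA⟩ := hpu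
    have hpl' : p = lst A := by
      by_contra hne; exact hpNL ((memNL p).2 ⟨A, hA, hne, hpA⟩)
    obtain ⟨q, hqA, hqm⟩ := Set.exists_min_image A (cD x0) (h.fin A hA) (h.ne A hA)
    have hqp := hqm p hpA
    have hcons : ∀ a ∈ A, cD p q ≤ cD p a := by
      intro a ha
      have m1 := hqm a ha
      have m2 := (hlst A hA).2 a ha
      rw [← hpl'] at m2
      by_contra hc
      push Not at hc
      have c1 := cD_sub hc
      have n1 : x0 ≠ p := fun e => hx0 (e ▸ h.rat A hA hpA)
      rcases cD_cases x0 p a with f | f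
      · linarith [cD_pos p a]
      · rcases cD_cases x0 p q with f' | f'
        · have : cD p q = 1 := by
            have : q = p := cD_inj (le_antisymm hqp (by linarith [cD_pos p q]))
            rw [this, cD_self]
          linarith [f.1, f.2, f'.1, cD_pos x0 p]
        · linarith [f.1, f.2, f'.1, f'.2]
    have hqr := h.rat A hA hqA
    obtain ⟨s', hs', hs'P⟩ := exists_minus (P := PU Fm ∪ {x0}) (h.finPU.union (finite_singleton _)) hqr
    have hadj : Eqv Fm s' (pl p) := eqv_adj h hA hpA hqA hcons (hpl p ⟨A, hA, hpA⟩).1 hs'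
      (fun t ht => (hpl p ⟨A, hA, hpA⟩).2 t (Or.inl ht)) (fun t ht => hs'P t (Or.inl ht))
    have k1 := cD_sub' (hs'P x0 (Or.inr rfl))
    obtain ⟨y, hy, hye⟩ := ih _ (by
      rw [← hn]
      refine Set.ncard_lt_ncard ⟨fun t ht' => ⟨ht'.1, ?_⟩, fun hc => ?_⟩ hfin
      · have := ht'.2
        simp only [Set.mem_ofPred_eq] at this ⊢
        linarith [cD_pos s' q]
      · have := (hc (show q ∈ _ from ⟨⟨A, hA, hqA⟩, by simp only [Set.mem_ofPred_eq]; linarith⟩)).2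
        simp only [Set.mem_ofPred_eq] at this
        linarith [cD_pos s' q]) s' hs' rfl
    exact ⟨y, hy, hxp.trans (hadj.symm.trans hye)⟩
  · rw [Finset.card_insert_of_notMem, Finset.card_image_of_injOn, cardNL, add_comm]
    · intro p hp q hq he
      exact inj p hp q hq (by rw [show pl p = pl q from he]; exact Eqv.refl h (plirr q hq))
    · intro hm
      obtain ⟨p, hp, he⟩ := Finset.mem_image.1 hm
      exact sep0 p hp (by rw [he]; exact Eqv.refl h hx0)

def cls {d : ℕ} (lam : InvRatLam d) (x : Circle1) : Set Circle1 := relClass lam.rel x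

lemma mem_cls {d : ℕ} {lam : InvRatLam d} {x y : Circle1} : y ∈ cls lam x ↔ lam.rel x y := Iff.rfl

lemma cls_self {d : ℕ} {lam : InvRatLam d} {x : Circle1} (h : x ∈ ratC) : x ∈ cls lam x := lam.refl x h

lemma cls_rat {d : ℕ} {lam : InvRatLam d} {x y : Circle1} (h : y ∈ cls lam x) : y ∈ ratC := (lam.rel_rat x y h).2

lemma cls_fin {d : ℕ} (lam : InvRatLam d) (x : Circle1) : (cls lam x).Finite := lam.finiteClass x

lemma cls_eq {d : ℕ} {lam : InvRatLam d} {x y : Circle1} (h : lam.rel x y) : cls lam x = cls lam y := by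
  ext z
  exact ⟨fun hz => lam.trans _ _ _ (lam.symm _ _ h) hz, fun hz => lam.trans _ _ _ h hz⟩

lemma md_cls {d : ℕ} {lam : InvRatLam d} {x : Circle1} (h : x ∈ ratC) :
    md d '' (cls lam x) = cls lam (md d x) := (lam.invariant x h).1

lemma rel_md {d : ℕ} {lam : InvRatLam d} {x y : Circle1} (h : lam.rel x y) : lam.rel (md d x) (md d y) := by
  have := md_cls (lam := lam) (lam.rel_rat x y h).1
  rw [← mem_cls, ← this]
  exact Set.mem_image_of_mem (md d) (show y ∈ cls lam x from h)

lemma cls_same {d : ℕ} {lam : InvRatLam d} {x y a b : Circle1} (h : ¬ lam.rel x y) (ha : lam.rel y a) (hb : lam.rel y b) :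
    Same (cls lam x) a b := by
  obtain ⟨z, hz, hsub⟩ := lam.unlinkedClass x y h
  have h1 : Same (cls lam x) z a := ⟨hz, hsub ha⟩
  have h2 : Same (cls lam x) z b := ⟨hz, hsub hb⟩
  exact h1.symm.trans h2

lemma rel_same {d : ℕ} {lam : InvRatLam d} {x a b : Circle1} (h : ¬ lam.rel x a) (hb : lam.rel a b) :
    Same (cls lam x) a b := cls_same h (lam.refl _ (lam.rel_rat _ _ hb).1) hb

def Cl {d : ℕ} (lam : InvRatLam d) (x y : Circle1) : Prop :=
  (x, y) ∈ closure {p : Circle1 × Circle1 | lam.rel p.1 p.2}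

lemma Cl.approx {d : ℕ} {lam : InvRatLam d} {a b : Circle1} (h : Cl lam a b) {P Q : Circle1 → Prop}
    (hP : ∀ᶠ p in nhds a, P p) (hQ : ∀ᶠ p in nhds b, Q p) : ∃ p q, lam.rel p q ∧ P p ∧ Q q := by
  unfold Cl at h
  rw [mem_closure_iff_nhds] at h
  obtain ⟨⟨p, q⟩, ⟨h1, h2⟩, h3⟩ := h _ (by rw [nhds_prod_eq]; exact Filter.prod_mem_prod hP hQ)
  exact ⟨p, q, h3, h1, h2⟩

lemma Cl.of_approx {d : ℕ} {lam : InvRatLam d} {a b : Circle1}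
    (h : ∀ U ∈ nhds a, ∀ V ∈ nhds b, ∃ p ∈ U, ∃ q ∈ V, lam.rel p q) : Cl lam a b := by
  unfold Cl
  rw [mem_closure_iff_nhds]
  intro W hW
  rw [nhds_prod_eq, Filter.mem_prod_iff] at hW
  obtain ⟨U, hU, V, hV, hs⟩ := hW
  obtain ⟨p, hp, q, hq, hr⟩ := h U hU V hV
  exact ⟨(p, q), hs ⟨hp, hq⟩, hr⟩

lemma Cl.symm {d : ℕ} {lam : InvRatLam d} {a b : Circle1} (h : Cl lam a b) : Cl lam b a := by
  refine Cl.of_approx fun U hU V hV => ?_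
  obtain ⟨p, q, hr, h1, h2⟩ := h.approx (P := (· ∈ V)) (Q := (· ∈ U)) hV hU
  exact ⟨q, h2, p, h1, lam.symm _ _ hr⟩

lemma md_cont (d : ℕ) : Continuous (md d) := continuous_const_smul d

lemma Cl.md {d : ℕ} {lam : InvRatLam d} {a b : Circle1} (h : Cl lam a b) : Cl lam (md d a) (md d b) := by
  refine Cl.of_approx fun U hU V hV => ?_
  obtain ⟨p, q, hr, h1, h2⟩ := h.approx (P := (_root_.md d · ∈ U)) (Q := (_root_.md d · ∈ V))
    ((md_cont d).continuousAt hU) ((md_cont d).continuousAt hV)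
  exact ⟨_, h1, _, h2, rel_md hr⟩

lemma Cl.same {d : ℕ} {lam : InvRatLam d} {x a b : Circle1} (h : Cl lam a b) (ha : a ∉ cls lam x) (hb : b ∉ cls lam x) :
    Same (cls lam x) a b := by
  obtain ⟨p, q, hr, h1, h2⟩ := h.approx (same_nhds (cls_fin lam x) ha) (same_nhds (cls_fin lam x) hb)
  exact h1.trans ((rel_same h1.right hr).trans h2.symm)

lemma rat_iff {x : Circle1} : x ∈ ratC ↔ IsOfFinAddOrder x := by
  rw [isOfFinAddOrder_iff_nsmul_eq_zero]
  constructor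
  · rintro ⟨q, rfl⟩
    refine ⟨q.den, q.pos, ?_⟩
    rw [← AddCircle.coe_nsmul, AddCircle.coe_eq_zero_iff]
    refine ⟨q.num, ?_⟩
    have : (q.den : ℚ) * q = q.num := by rw [mul_comm]; exact Rat.mul_den_eq_num q
    simp only [zsmul_eq_mul, mul_one, nsmul_eq_mul]
    exact_mod_cast this.symm
  · rintro ⟨n, hn, h⟩
    induction x using QuotientAddGroup.induction_on with
    | H r =>
      change n • ((r : ℝ) : Circle1) = 0 at h
      rw [← AddCircle.coe_nsmul, AddCircle.coe_eq_zero_iff] at h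
      obtain ⟨k, hk⟩ := h
      refine ⟨(k : ℚ) / n, ?_⟩
      congr 1
      simp only [zsmul_eq_mul, mul_one, nsmul_eq_mul] at hk
      push_cast
      field_simp
      linarith

lemma not_cl_rat_irr {d : ℕ} (hd : 2 ≤ d) {lam : InvRatLam d} {x y : Circle1} (hx : x ∈ ratC) (hy : y ∉ ratC) :
    ¬ Cl lam x y := by
  intro h
  have hfo := rat_iff.1 hx
  have hN : 0 < addOrderOf x := hfo.addOrderOf_pos
  obtain ⟨k, n, hkn, hmod⟩ : ∃ k n : ℕ, k < n ∧ d ^ k ≡ d ^ n [MOD addOrderOf x] := by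
    obtain ⟨a, b, hne, hab⟩ := Finite.exists_ne_map_eq_of_infinite
      (fun n : ℕ => (⟨d ^ n % addOrderOf x, Nat.mod_lt _ hN⟩ : Fin (addOrderOf x)))
    have hab' : d ^ a % addOrderOf x = d ^ b % addOrderOf x := by simpa using hab
    rcases lt_or_gt_of_ne hne with h | h
    · exact ⟨a, b, h, hab'⟩
    · exact ⟨b, a, h, hab'.symm⟩
  obtain ⟨p, hp, rfl⟩ : ∃ p, 0 < p ∧ n = k + p := ⟨n - k, by omega, by omega⟩
  have hclN : ∀ i : ℕ, Cl lam (d ^ i • x) (d ^ i • y) := by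
    intro i
    induction i with
    | zero => simpa using h
    | succ i ih =>
      have := ih.md
      unfold md at this
      simpa only [smul_smul, ← pow_succ'] using this
  have hper : ∀ i : ℕ, d ^ (k + i * p) • x = d ^ k • x := by
    intro i
    induction i with
    | zero => simp
    | succ i ih =>
      have e : k + (i + 1) * p = i * p + (k + p) := by ring
      have h2 : d ^ (k + p) • x = d ^ k • x := (nsmul_eq_nsmul_iff_modEq.2 hmod).symm
      rw [e, pow_add, mul_smul, h2, ← mul_smul, ← pow_add, add_comm, ih]
  have hinj : Function.Injective (fun i : ℕ => d ^ (k + i * p) • y) := by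
    intro i j hij
    by_contra hne
    have hy' : ¬ IsOfFinAddOrder y := fun h => hy (rat_iff.2 h)
    have := injective_nsmul_iff_not_isOfFinAddOrder.2 hy' hij
    have := Nat.pow_right_injective hd this
    have : i * p = j * p := by omega
    exact hne (Nat.eq_of_mul_eq_mul_right hp this)
  set x0 := d ^ k • x with hx0
  have hx0r : x0 ∈ ratC := rat_iff.2 hfo.nsmul
  have hZ : {z | z ∉ ratC ∧ Cl lam x0 z}.Infinite := by
    refine Set.infinite_of_injective_forall_mem hinj fun i => ⟨fun hr => ?_, ?_⟩
    · have h1 := rat_iff.1 hr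
      obtain ⟨m, hm, hm'⟩ := isOfFinAddOrder_iff_nsmul_eq_zero.1 h1
      rw [← mul_smul] at hm'
      exact hy (rat_iff.2 (isOfFinAddOrder_iff_nsmul_eq_zero.2 ⟨_, by positivity, hm'⟩))
    · have := hclN (k + i * p)
      rwa [hper] at this
  have hZ' : (cD x0 '' {z | z ∉ ratC ∧ Cl lam x0 z}).Infinite := hZ.image (fun a _ b _ h => cD_inj h)
  obtain ⟨t, ht, htc⟩ := hZ'.exists_subset_card_eq 3
  let f := t.orderEmbOfFin htc
  obtain ⟨z1, hz1, e1⟩ := ht (t.orderEmbOfFin_mem htc 0)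
  obtain ⟨z2, hz2, e2⟩ := ht (t.orderEmbOfFin_mem htc 1)
  obtain ⟨z3, hz3, e3⟩ := ht (t.orderEmbOfFin_mem htc 2)
  have l12 : cD x0 z1 < cD x0 z2 := by rw [e1, e2]; exact (t.orderEmbOfFin htc).strictMono (by decide)
  have l23 : cD x0 z2 < cD x0 z3 := by rw [e3, e2]; exact (t.orderEmbOfFin htc).strictMono (by decide)
  have l3 : cD x0 z3 < 1 := cD_lt_one (fun e => hz3.1 (e ▸ hx0r))
  have hz2n : z2 ∉ cls lam x0 := fun h => hz2.1 (cls_rat h)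
  obtain ⟨p', q, hr, hp', hq, hqn⟩ := hz2.2.approx
    (nhds_cD x0 (e := min (cD x0 z1) (1 - cD x0 z3)) (lt_min (cD_pos _ _) (by linarith)))
    ((nhds_cD z2 (e := min (cD x0 z2 - cD x0 z1) (cD x0 z3 - cD x0 z2)) (lt_min (by linarith) (by linarith))).and
      ((cls_fin lam x0).isClosed.isOpen_compl.mem_nhds hz2n))
  have hnot : ¬ lam.rel x0 p' := fun h => hqn (lam.trans _ _ _ h hr)
  have hpA : p' ∈ cls lam p' := cls_self (lam.rel_rat _ _ hr).1
  have hqA : q ∈ cls lam p' := hr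
  have hx0A : x0 ∉ cls lam p' := fun h => hnot (lam.symm _ _ h)
  have hqI : cD x0 z1 < cD x0 q ∧ cD x0 q < cD x0 z3 := by
    rcases hq with rfl | hq | hq
    · exact absurd (cls_rat hqA) hz2.1
    · have := lt_min_iff.1 hq
      have := cD_pos z2 q
      rcases cD_cases x0 z2 q with h | h
      · exact ⟨by linarith, by linarith⟩
      · linarith [h.1]
    · have := lt_min_iff.1 hq
      have h0 := cD_pos x0 z1
      have := cD_sub' (x := x0) (y := q) (z := z2) (by linarith)
      have := cD_pos q z2
      exact ⟨by linarith, by linarith⟩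
  rcases hp' with rfl | hp' | hp'
  · exact hx0A hpA
  · exact not_same hpA hqA (lt_of_lt_of_le hp' (min_le_left _ _)) hqI.1
      (hz1.2.same hx0A (fun h => hz1.1 (cls_rat h)))
  · have h1 := lt_of_lt_of_le hp' (min_le_right _ _)
    have h2 := cD_symm (x := x0) (y := p') (fun e => hx0A (e ▸ hpA))
    exact not_same hqA hpA hqI.2 (by linarith) (hz3.2.same hx0A (fun h => hz3.1 (cls_rat h)))

lemma Cl.rat_iff {d : ℕ} (hd : 2 ≤ d) {lam : InvRatLam d} {x y : Circle1} (h : Cl lam x y) : x ∈ ratC ↔ y ∈ ratC := by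
  constructor
  · intro hx; by_contra hy; exact not_cl_rat_irr hd hx hy h
  · intro hx; by_contra hy; exact not_cl_rat_irr hd hx hy h.symm

lemma Cl.rel {d : ℕ} (hd : 2 ≤ d) {lam : InvRatLam d} {x y : Circle1} (h : Cl lam x y) (hx : x ∈ ratC) : lam.rel x y :=
  lam.closed' x hx y ((h.rat_iff hd).1 hx) h

lemma rel_cl {d : ℕ} {lam : InvRatLam d} {x y : Circle1} (h : lam.rel x y) : Cl lam x y :=
  subset_closure h

lemma realExt_rat {d : ℕ} (hd : 2 ≤ d) {lam : InvRatLam d} {x y : Circle1} (h : realExt lam.rel x y) :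
    (x ∈ ratC ↔ y ∈ ratC) ∧ (x ∈ ratC → lam.rel x y) := by
  unfold realExt at h
  induction h with
  | rel x y h => exact ⟨Cl.rat_iff hd h, fun hx => Cl.rel hd h hx⟩
  | refl x => exact ⟨Iff.rfl, lam.refl x⟩
  | symm x y _ ih => exact ⟨ih.1.symm, fun hy => lam.symm _ _ (ih.2 (ih.1.2 hy))⟩
  | trans x y z _ _ ih1 ih2 => exact ⟨ih1.1.trans ih2.1, fun hx => lam.trans _ _ _ (ih1.2 hx) (ih2.2 (ih1.1.1 hx))⟩

lemma realExt_cls {d : ℕ} (hd : 2 ≤ d) {lam : InvRatLam d} {x : Circle1} (hx : x ∈ ratC) :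
    {y | realExt lam.rel x y} = cls lam x := by
  ext y
  exact ⟨fun h => (realExt_rat hd h).2 hx, fun h => Relation.EqvGen.rel _ _ (rel_cl h)⟩

/-- unlinked relation -/
def Unl {d : ℕ} (lam : InvRatLam d) (x y : Circle1) : Prop := ∀ z ∈ ratC, Same (cls lam z) x y

lemma irr_nmem {d : ℕ} {lam : InvRatLam d} {x z : Circle1} (hx : x ∉ ratC) : x ∉ cls lam z := fun h => hx (cls_rat h)

lemma Unl.refl {d : ℕ} {lam : InvRatLam d} {x : Circle1} (hx : x ∉ ratC) : Unl lam x x :=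
  fun _ _ => Same.refl (irr_nmem hx)
lemma Unl.symm {d : ℕ} {lam : InvRatLam d} {x y : Circle1} (h : Unl lam x y) : Unl lam y x :=
  fun z hz => (h z hz).symm
lemma Unl.trans {d : ℕ} {lam : InvRatLam d} {x y w : Circle1} (h : Unl lam x y) (h' : Unl lam y w) : Unl lam x w :=
  fun z hz => (h z hz).trans (h' z hz)
lemma Unl.left {d : ℕ} {lam : InvRatLam d} {x y : Circle1} (h : Unl lam x y) : x ∉ ratC :=
  fun hx => (h x hx).left (cls_self hx)
lemma Unl.right {d : ℕ} {lam : InvRatLam d} {x y : Circle1} (h : Unl lam x y) : y ∉ ratC := h.symm.left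

lemma unlRel_iff {d : ℕ} {lam : InvRatLam d} {x y : Circle1} : UnlRel lam.rel x y ↔ Unl lam x y := by
  constructor
  · rintro ⟨hx, hy, rfl | h⟩
    · exact Unl.refl hx
    · exact fun z hz => ⟨irr_nmem hx, h z hz⟩
  · intro h
    exact ⟨h.left, h.right, Or.inr fun z hz => (h z hz).2⟩

lemma realExt_unl {d : ℕ} (hd : 2 ≤ d) {lam : InvRatLam d} {x y : Circle1} (h : realExt lam.rel x y) (hx : x ∉ ratC) :
    Unl lam x y := by
  unfold realExt at h
  induction h with
  | rel x y h =>
    have hy : y ∉ ratC := fun hy => hx ((Cl.rat_iff hd h).2 hy)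
    exact fun z _ => Cl.same h (irr_nmem hx) (irr_nmem hy)
  | refl x => exact Unl.refl hx
  | symm x y h ih => exact (ih (fun h' => hx ((realExt_rat hd h).1.1 h'))).symm
  | trans x y z h1 h2 ih1 ih2 =>
    have := ih1 hx
    exact this.trans (ih2 this.right)

def Unif {d : ℕ} (lam : InvRatLam d) (dg : Set Circle1 → ℕ) : Prop :=
  ∀ x ∈ ratC, 1 ≤ dg (cls lam x) ∧ classDeg d (cls lam x) (dg (cls lam x))

def fib (d : ℕ) (c : Circle1) : Finset Circle1 :=
  open Classical in (Finset.range d).image (fun k : ℕ => lft d 0 c + ((((k : ℝ) + 1) / d : ℝ) : Circle1))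

lemma mem_fib {d : ℕ} (hd : 2 ≤ d) {c t : Circle1} : t ∈ fib d c ↔ md d t = c := by
  classical
  have hd' : (2:ℝ) ≤ d := by exact_mod_cast hd
  unfold fib
  rw [Finset.mem_image]
  constructor
  · rintro ⟨k, hk, rfl⟩
    rw [md_coe, md_lft hd, mul_div_cancel₀ _ (by positivity)]
    have := coe_nat_c (k+1)
    push_cast at this
    rw [this, add_zero]
  · intro h
    obtain ⟨k, hk⟩ := cD_md hd (lft d 0 c) t
    rw [md_lft hd, h, cD_self] at hk
    have h1 := cD_le (lft d 0 c) t
    refine ⟨k, ?_, ?_⟩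
    · rw [Finset.mem_range]
      have : (k:ℝ) + 1 ≤ d := by nlinarith
      have : k + 1 ≤ d := by exact_mod_cast this
      omega
    · rw [← hk, mul_div_cancel_left₀ _ (by positivity), cD_coe]

lemma card_fib {d : ℕ} (hd : 2 ≤ d) (c : Circle1) : (fib d c).card = d := by
  classical
  have hd' : (2:ℝ) ≤ d := by exact_mod_cast hd
  unfold fib
  rw [Finset.card_image_of_injOn, Finset.card_range]
  intro k hk j hj hkj
  have hk' : (k:ℝ) + 1 ≤ d := by have := Finset.mem_range.1 hk; exact_mod_cast this
  have hj' : (j:ℝ) + 1 ≤ d := by have := Finset.mem_range.1 hj; exact_mod_cast this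
  have h1 := cD_add (x := lft d 0 c) (r := ((k:ℝ)+1)/d) (by positivity) (by rw [div_le_one (by positivity)]; exact hk')
  have h2 := cD_add (x := lft d 0 c) (r := ((j:ℝ)+1)/d) (by positivity) (by rw [div_le_one (by positivity)]; exact hj')
  have h3 : ((k:ℝ)+1)/d = ((j:ℝ)+1)/d := by rw [← h1, ← h2]; exact congrArg _ hkj
  have h4 : (k:ℝ) + 1 = j + 1 := by field_simp at h3; exact h3
  exact_mod_cast add_right_cancel h4

def rft (d : ℕ) (v c : Circle1) : Circle1 := v + ((-(cD c (md d v) / d) : ℝ) : Circle1)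

lemma md_rft {d : ℕ} (hd : 2 ≤ d) (v c : Circle1) : md d (rft d v c) = c := by
  have hd' : (2:ℝ) ≤ d := by exact_mod_cast hd
  unfold rft
  rw [md_coe, mul_neg, mul_div_cancel₀ _ (by positivity), AddCircle.coe_neg]
  have := cD_coe c (md d v)
  nth_rewrite 1 [← this]
  abel

lemma cD_rft {d : ℕ} (hd : 2 ≤ d) (v c : Circle1) : cD (rft d v c) v = cD c (md d v) / d := by
  have hd' : (2:ℝ) ≤ d := by exact_mod_cast hd
  apply cD_uniq
  · have := cD_pos c (md d v); positivity
  · rw [div_le_one (by positivity)]; linarith [cD_le c (md d v)]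
  · unfold rft; rw [AddCircle.coe_neg]; abel

lemma arc_same {A : Set Circle1} {u v a a' : Circle1} (hu : u ∈ A) (hv : v ∈ A) (h : cD u a < cD u v)
    (hs : Same A a a') : cD u a' < cD u v := by
  by_contra hc
  push Not at hc
  have hne : cD u v ≠ cD u a' := fun e => hs.right (cD_inj e ▸ hv)
  have hlt := lt_of_le_of_ne hc hne
  have h1 := cD_sub h
  have h2 := cD_sub (h.trans hlt)
  have h3 : u ≠ a := fun e => hs.left (e ▸ hu)
  have h4 : u ≠ a' := fun e => hs.right (e ▸ hu)
  have h5 := cD_symm h3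
  have h6 := cD_lt_one h4
  exact not_same hv hu (by linarith) (by linarith) hs

lemma sat_card {d : ℕ} (hd : 2 ≤ d) {lam : InvRatLam d} {dg : Set Circle1 → ℕ} (hdg : Unif lam dg)
    (P : Circle1 → Prop) (hP : ∀ t t', P t → lam.rel t t' → P t') {c c' : Circle1} (h : lam.rel c c') :
    open Classical in ((fib d c).filter P).card = ((fib d c').filter P).card := by
  classical
  have hc := (lam.rel_rat _ _ h).1
  have hc' := (lam.rel_rat _ _ h).2
  have key : ∀ c c' : Circle1, lam.rel c c' →
      ((fib d c).filter P).card ≤ ((fib d c').filter P).card := by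
    intro c c' h
    have hc := (lam.rel_rat _ _ h).1
    have hc' := (lam.rel_rat _ _ h).2
    have hm1 : ∀ t ∈ (fib d c).filter P, t ∈ ratC := fun t ht => by
      rw [Finset.mem_filter, mem_fib hd] at ht
      exact (ratC_md hd).1 (ht.1 ▸ hc)
    rw [Finset.card_eq_sum_card_image (cls lam) ((fib d c).filter P)]
    have : ∀ A ∈ ((fib d c).filter P).image (cls lam),
        (((fib d c).filter P).filter (fun t => cls lam t = A)).card ≤
        (((fib d c').filter P).filter (fun t => cls lam t = A)).card := by
      intro A hA
      obtain ⟨t, ht, rfl⟩ := Finset.mem_image.1 hA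
      have htr := hm1 t ht
      rw [Finset.mem_filter, mem_fib hd] at ht
      have im : ∀ e, lam.rel c e → (((fib d e).filter P).filter (fun t' => cls lam t' = cls lam t)).card = dg (cls lam t) := by
        intro e he
        rw [← (hdg t htr).2 e (by rw [md_cls htr, ht.1]; exact he), ← Set.ncard_coe_finset]
        congr 1
        ext s
        simp only [Finset.coe_filter, Finset.mem_filter, mem_fib hd, Set.mem_ofPred_eq]
        constructor
        · rintro ⟨⟨h1, h2⟩, h3⟩
          refine ⟨?_, h1⟩
          rw [← h3]; exact cls_self ((ratC_md hd).1 (h1 ▸ (lam.rel_rat _ _ he).2))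
        · rintro ⟨h1, h2⟩
          exact ⟨⟨h2, hP _ _ ht.2 h1⟩, (cls_eq h1).symm⟩
      rw [im c (lam.refl c hc), im c' h]
    refine (Finset.sum_le_sum this).trans ?_
    rw [← Finset.card_biUnion]
    · apply Finset.card_le_card
      intro t ht
      obtain ⟨A, -, h2⟩ := Finset.mem_biUnion.1 ht
      exact (Finset.mem_filter.1 h2).1
    · intro A _ A' _ hne
      rw [Function.onFun, Finset.disjoint_left]
      intro t ht ht'
      exact hne ((Finset.mem_filter.1 ht).2.symm.trans (Finset.mem_filter.1 ht').2)
  exact le_antisymm (key _ _ h) (key _ _ (lam.symm _ _ h))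

lemma consec_md {d : ℕ} (hd : 2 ≤ d) {lam : InvRatLam d} {dg : Set Circle1 → ℕ} (hdg : Unif lam dg)
    {u v : Circle1} (huv : lam.rel u v) (hcon : ∀ a ∈ cls lam u, cD u v ≤ cD u a) :
    ∀ b ∈ cls lam (md d u), cD (md d u) (md d v) ≤ cD (md d u) b := by
  classical
  intro b hb
  by_contra hlt
  push Not at hlt
  have hd' : (2:ℝ) ≤ d := by exact_mod_cast hd
  have hur := (lam.rel_rat _ _ huv).1
  have hsat : ∀ t t', cD u t < cD u v → lam.rel t t' → cD u t' < cD u v := by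
    intro t t' ht hr
    have hn : ¬ lam.rel u t := fun h => by have := hcon t h; linarith
    exact arc_same (A := cls lam u) (cls_self hur) huv ht (rel_same hn hr)
  have hcard := sat_card hd hdg (fun t => cD u t < cD u v) hsat
    (lam.trans _ _ _ (lam.symm _ _ (rel_md huv)) hb : lam.rel (md d v) b)
  have hsub := cD_sub hlt
  have hbpos := cD_pos (md d u) b
  have hpos := cD_pos b (md d v)
  let f : Circle1 → Circle1 := fun t => t + ((-(cD b (md d v) / d) : ℝ) : Circle1)
  have hf : ∀ t, md d t = md d v → cD u t ≤ cD u v → f t ∈ (fib d b).filter (fun t => cD u t < cD u v) := by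
    intro t ht htv
    have hft : f t = rft d t b := by simp only [f, rft, ht]
    rw [Finset.mem_filter, mem_fib hd, hft]
    refine ⟨md_rft hd _ _, ?_⟩
    have h1 := cD_rft hd t b
    have h2 := cD_md_le hd u t
    rw [ht] at h2 h1
    have h3 : cD (rft d t b) t < cD u t := by
      rw [h1, div_lt_iff₀ (by positivity)]; linarith
    have := cD_sub' h3
    linarith [cD_pos (rft d t b) t]
  have hv : v ∉ (fib d (md d v)).filter (fun t => cD u t < cD u v) := by
    simp
  have : (insert v ((fib d (md d v)).filter (fun t => cD u t < cD u v))).card ≤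
      ((fib d b).filter (fun t => cD u t < cD u v)).card := by
    refine Finset.card_le_card_of_injOn f ?_ ?_
    · intro t ht
      rcases Finset.mem_insert.1 ht with rfl | ht
      · exact hf t rfl le_rfl
      · rw [Finset.mem_filter, mem_fib hd] at ht
        exact hf t ht.1 ht.2.le
    · intro t _ t' _ h
      exact add_right_cancel h
  rw [Finset.card_insert_of_notMem hv] at this
  omega

lemma pred_uniq {B : Set Circle1} {u w v : Circle1} (hu : u ∈ B) (hw : w ∈ B)
    (h1 : ∀ b ∈ B, cD u v ≤ cD u b) (h2 : ∀ b ∈ B, cD w v ≤ cD w b) : u = w := by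
  by_contra hne
  have a := h1 w hw
  have b := h2 u hu
  have c := cD_symm hne
  rcases a.eq_or_lt with e | hlt
  · have := cD_inj e; subst this
    rw [cD_self] at b
    linarith [cD_pos u v]
  · have e1 := cD_sub hlt
    have hvw : v ≠ w := by rintro rfl; exact lt_irrefl _ hlt
    have e2 := cD_symm hvw
    linarith [cD_pos u v]

/-- families of rational classes -/
def IsFam {d : ℕ} (lam : InvRatLam d) (F : Finset (Set Circle1)) : Prop := ∀ A ∈ F, ∃ x ∈ ratC, A = cls lam x

lemma IsFam.good {d : ℕ} {lam : InvRatLam d} {F : Finset (Set Circle1)} (h : IsFam lam F) : GoodFam F where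
  fin := fun A hA => by obtain ⟨x, hx, rfl⟩ := h A hA; exact cls_fin lam x
  ne := fun A hA => by obtain ⟨x, hx, rfl⟩ := h A hA; exact ⟨x, cls_self hx⟩
  rat := fun A hA => by obtain ⟨x, hx, rfl⟩ := h A hA; exact fun y hy => cls_rat hy
  unl := fun A hA A' hA' hne a ha b hb => by
    obtain ⟨x, hx, rfl⟩ := h A hA
    obtain ⟨x', hx', rfl⟩ := h A' hA'
    exact cls_same (y := x) (fun hr => hne (cls_eq hr).symm) ha hb

def up {d : ℕ} (lam : InvRatLam d) (F : Finset (Set Circle1)) : Finset (Set Circle1) :=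
  open Classical in
  if h : {A | ∃ x ∈ ratC, A = cls lam x ∧ cls lam (md d x) ∈ F}.Finite then h.toFinset else ∅

lemma mem_up {d : ℕ} (hd : 2 ≤ d) {lam : InvRatLam d} {F : Finset (Set Circle1)} (hF : IsFam lam F) {A : Set Circle1} :
    A ∈ up lam F ↔ ∃ x ∈ ratC, A = cls lam x ∧ cls lam (md d x) ∈ F := by
  have hfin : {A | ∃ x ∈ ratC, A = cls lam x ∧ cls lam (md d x) ∈ F}.Finite := by
    have h1 : (⋃ p ∈ PU F, (fib d p : Set Circle1)).Finite :=
      hF.good.finPU.biUnion fun p _ => (fib d p).finite_toSet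
    refine (h1.image (cls lam)).subset ?_
    rintro A ⟨x, hx, rfl, hxF⟩
    refine ⟨x, ?_, rfl⟩
    simp only [Set.mem_iUnion]
    refine ⟨md d x, ⟨_, hxF, cls_self ((ratC_md hd).2 hx)⟩, ?_⟩
    exact (mem_fib hd).2 rfl
  unfold up
  rw [dif_pos hfin, Set.Finite.mem_toFinset]
  rfl

lemma IsFam.up {d : ℕ} (hd : 2 ≤ d) {lam : InvRatLam d} {F : Finset (Set Circle1)} (hF : IsFam lam F) :
    IsFam lam (up lam F) := fun A hA => by
  obtain ⟨x, hx, h, -⟩ := (mem_up hd hF).1 hA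
  exact ⟨x, hx, h⟩

lemma IsFam.cls_eq {d : ℕ} {lam : InvRatLam d} {F : Finset (Set Circle1)} (hF : IsFam lam F) {A : Set Circle1} (hA : A ∈ F)
    {a : Circle1} (ha : a ∈ A) : A = cls lam a := by
  obtain ⟨x, hx, rfl⟩ := hF A hA
  exact _root_.cls_eq ha

lemma mem_PU {d : ℕ} {lam : InvRatLam d} {F : Finset (Set Circle1)} (hF : IsFam lam F) {p : Circle1} :
    p ∈ PU F ↔ p ∈ ratC ∧ cls lam p ∈ F := by
  constructor
  · rintro ⟨A, hA, hp⟩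
    exact ⟨hF.good.rat A hA hp, hF.cls_eq hA hp ▸ hA⟩
  · rintro ⟨h1, h2⟩; exact ⟨_, h2, cls_self h1⟩

lemma mem_up_cls {d : ℕ} (hd : 2 ≤ d) {lam : InvRatLam d} {F : Finset (Set Circle1)} (hF : IsFam lam F) {x : Circle1}
    (hx : x ∈ ratC) : cls lam x ∈ up lam F ↔ cls lam (md d x) ∈ F := by
  rw [mem_up hd hF]
  constructor
  · rintro ⟨z, hz, h1, h2⟩
    have : lam.rel z x := by have := cls_self (lam := lam) hx; rw [h1] at this; exact this
    rwa [← cls_eq (rel_md this)]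
  · intro h; exact ⟨x, hx, rfl, h⟩

lemma mem_PU_up {d : ℕ} (hd : 2 ≤ d) {lam : InvRatLam d} {F : Finset (Set Circle1)} (hF : IsFam lam F) {p : Circle1} :
    p ∈ PU (up lam F) ↔ md d p ∈ PU F := by
  rw [mem_PU (hF.up hd), mem_PU hF, ratC_md hd]
  constructor
  · rintro ⟨h1, h2⟩; exact ⟨h1, (mem_up_cls hd hF h1).1 h2⟩
  · rintro ⟨h1, h2⟩; exact ⟨h1, (mem_up_cls hd hF h1).2 h2⟩

lemma irr_md {d : ℕ} (hd : 2 ≤ d) {x : Circle1} : md d x ∉ ratC ↔ x ∉ ratC := not_congr (ratC_md hd)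

lemma eqv_md {d : ℕ} (hd : 2 ≤ d) {lam : InvRatLam d} {dg : Set Circle1 → ℕ} (hdg : Unif lam dg)
    {F : Finset (Set Circle1)} (hF : IsFam lam F) {x x' : Circle1} (hx : x ∉ ratC) (hx' : x' ∉ ratC)
    (h : Eqv (up lam F) x x') : Eqv F (md d x) (md d x') := by
  have hd' : (2:ℝ) ≤ d := by exact_mod_cast hd
  by_cases hxx : x = x'
  · subst hxx; exact Eqv.refl hF.good ((irr_md hd).2 hx)
  refine walk (hF.up hd).good (fun a b => Eqv F (md d a) (md d b)) (fun x y z h1 h2 => h1.trans h2) ?_ ?_ x x' hx hx' hxx h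
  · intro a b ha hb hab
    refine eqv_arc hF.good ((irr_md hd).2 ha) ((irr_md hd).2 hb) ?_
    exact arc_md_free hd (fun p hp => hab p ((mem_PU_up hd hF).2 hp))
  · intro A hA u hu v hv hcon s s' hs hs' h1 h2
    have hur : u ∈ ratC := (hF.up hd).good.rat A hA hu
    have hAu := (hF.up hd).cls_eq hA hu
    subst hAu
    have hB := (mem_up_cls hd hF hur).1 hA
    refine eqv_adj hF.good hB (cls_self ((ratC_md hd).2 hur)) (rel_md hv) (consec_md hd hdg hv hcon)
      ((irr_md hd).2 hs) ((irr_md hd).2 hs') ?_ ?_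
    · intro p hp
      have e1 := h1 (lft d u p) ((mem_PU_up hd hF).2 (by rwa [md_lft hd]))
      rw [cD_lft hd, lt_div_iff₀ (by positivity)] at e1
      linarith [cD_md_le hd u s]
    · intro p hp
      have e1 := h2 (rft d v p) ((mem_PU_up hd hF).2 (by rwa [md_rft hd]))
      rw [cD_rft hd, lt_div_iff₀ (by positivity)] at e1
      linarith [cD_md_le hd s' v]

lemma eqv_lift {d : ℕ} (hd : 2 ≤ d) {lam : InvRatLam d} {dg : Set Circle1 → ℕ} (hdg : Unif lam dg)
    {F : Finset (Set Circle1)} (hF : IsFam lam F) {x y' : Circle1} (hx : x ∉ ratC) (hy' : y' ∉ ratC)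
    (h : Eqv F (md d x) y') : ∃ x', md d x' = y' ∧ Eqv (up lam F) x x' := by
  have hd' : (2:ℝ) ≤ d := by exact_mod_cast hd
  by_cases hxx : md d x = y'
  · exact ⟨x, hxx, Eqv.refl (hF.up hd).good hx⟩
  refine walk hF.good (fun a b => ∀ x, md d x = a → ∃ x', md d x' = b ∧ Eqv (up lam F) x x') ?_ ?_ ?_
    (md d x) y' ((irr_md hd).2 hx) hy' hxx h x rfl
  · intro a b c h1 h2 x hx
    obtain ⟨x1, e1, f1⟩ := h1 x hx
    obtain ⟨x2, e2, f2⟩ := h2 x1 e1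
    exact ⟨x2, e2, f1.trans f2⟩
  · rintro a b ha hb hab x rfl
    refine ⟨lft d x b, md_lft hd _ _, ?_⟩
    refine eqv_arc (hF.up hd).good ((irr_md hd).1 ha) ((irr_md hd).1 (by rwa [md_lft hd])) ?_
    intro p hp hlt
    refine hab _ ((mem_PU_up hd hF).1 hp) ?_
    rw [cD_lft hd, lt_div_iff₀ (by positivity)] at hlt
    linarith [cD_md_le hd x p]
  · rintro B hB u hu v hv hcon s s' hs hs' h1 h2 x rfl
    have hvr := hF.good.rat B hB hv
    set a := lft d x v with ha
    have hma : md d a = v := md_lft hd _ _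
    have har : a ∈ ratC := (ratC_md hd).1 (hma ▸ hvr)
    obtain ⟨w, hw, hwcon⟩ := exists_pred (cls_fin lam a) (cls_self har)
    have hwr := cls_rat hw
    have hwa : lam.rel w a := lam.symm _ _ hw
    have hBv := hF.cls_eq hB hv
    have hBw : B = cls lam (md d w) := by
      rw [hBv, ← hma]; exact cls_eq (rel_md hw)
    have hmw : md d w = u := by
      refine pred_uniq (B := B) (v := v) ?_ hu ?_ hcon
      · rw [hBw]; exact cls_self ((ratC_md hd).2 hwr)
      · have := consec_md hd hdg hwa (by rw [cls_eq hwa]; exact hwcon)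
        rwa [← hBw, hma] at this
    have hA : cls lam a ∈ up lam F := (mem_up_cls hd hF har).2 (by rw [hma, ← hBv]; exact hB)
    refine ⟨lft d w s, md_lft hd _ _, ?_⟩
    refine eqv_adj (hF.up hd).good hA hw (cls_self har) hwcon ((irr_md hd).1 (by rwa [md_lft hd])) ((irr_md hd).1 hs') ?_ ?_
    · intro p hp
      have e1 := h1 _ ((mem_PU_up hd hF).1 hp)
      rw [cD_lft hd, div_lt_iff₀ (by positivity), hmw]
      have := cD_md_le hd w p
      rw [hmw] at this
      linarith
    · intro p hp
      have e1 := h2 _ ((mem_PU_up hd hF).1 hp)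
      rw [ha, cD_lft hd, div_lt_iff₀ (by positivity), ← ha]
      have := cD_md_le hd p a
      rw [hma] at this
      linarith

structure EqI (E : Circle1 → Circle1 → Prop) : Prop where
  refl : ∀ x, x ∉ ratC → E x x
  symm : ∀ x y, E x y → E y x
  trans : ∀ x y z, E x y → E y z → E x z

lemma EqI.cls_eq {E : Circle1 → Circle1 → Prop} (h : EqI E) {x y : Circle1} (hy : y ∉ ratC) :
    ({x' | E x x'} : Set Circle1) = {x' | E y x'} ↔ E x y := by
  constructor
  · intro e
    have : y ∈ ({x' | E y x'} : Set Circle1) := h.refl y hy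
    rw [← e] at this; exact this
  · intro e; ext z; exact ⟨fun hz => h.trans _ _ _ (h.symm _ _ e) hz, fun hz => h.trans _ _ _ e hz⟩

lemma eqI_eqv {Fm : Finset (Set Circle1)} (h : GoodFam Fm) : EqI (Eqv Fm) :=
  ⟨fun _ hx => Eqv.refl h hx, fun _ _ h => h.symm, fun _ _ _ h1 h2 => h1.trans h2⟩

lemma eqI_unl {d : ℕ} (lam : InvRatLam d) : EqI (Unl lam) :=
  ⟨fun _ hx => Unl.refl hx, fun _ _ h => h.symm, fun _ _ _ h1 h2 => h1.trans h2⟩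

def Nn (d : ℕ) (E : Circle1 → Circle1 → Prop) (y : Circle1) : ℕ :=
  open Classical in ((fib d y).image (fun x => ({x' | E x x'} : Set Circle1))).card

lemma Nn_le {d : ℕ} (hd : 2 ≤ d) (E : Circle1 → Circle1 → Prop) (y : Circle1) : Nn d E y ≤ d := by
  classical
  unfold Nn
  exact Finset.card_image_le.trans (card_fib hd y).le

lemma Nn_mono {d : ℕ} (hd : 2 ≤ d) {E E' : Circle1 → Circle1 → Prop} (hE : EqI E) (hE' : EqI E')
    (h : ∀ x y, E' x y → E x y) {y : Circle1} (hy : y ∉ ratC) : Nn d E y ≤ Nn d E' y := by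
  classical
  unfold Nn
  have : (fib d y).image (fun x => ({x' | E x x'} : Set Circle1)) =
      ((fib d y).image (fun x => ({x' | E' x x'} : Set Circle1))).image (fun c => {z | ∃ x' ∈ c, E x' z}) := by
    rw [Finset.image_image]
    refine Finset.image_congr fun x hx => ?_
    have hx' : x ∉ ratC := (irr_md hd).1 ((mem_fib hd).1 hx ▸ hy)
    ext z
    simp only [Function.comp, Set.mem_ofPred_eq]
    exact ⟨fun hz => ⟨x, hE'.refl x hx', hz⟩, fun ⟨x', h1, h2⟩ => hE.trans _ _ _ (h _ _ h1) h2⟩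
  rw [this]
  exact Finset.card_image_le

lemma Nn_congr {d : ℕ} (hd : 2 ≤ d) {E E' : Circle1 → Circle1 → Prop} (hE : EqI E) (hE' : EqI E') {y : Circle1} (hy : y ∉ ratC)
    (h : ∀ x ∈ fib d y, ∀ x' ∈ fib d y, E x x' ↔ E' x x') : Nn d E y = Nn d E' y := by
  classical
  have key : ∀ E E' : Circle1 → Circle1 → Prop, EqI E → EqI E' → (∀ x ∈ fib d y, ∀ x' ∈ fib d y, E x x' → E' x x') →
      Nn d E' y ≤ Nn d E y := by
    intro E E' hE hE' h
    unfold Nn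
    have irr : ∀ x ∈ fib d y, x ∉ ratC := fun x hx => (irr_md hd).1 ((mem_fib hd).1 hx ▸ hy)
    have : (fib d y).image (fun x => ({x' | E' x x'} : Set Circle1)) ⊆
      ((fib d y).image (fun x => ({x' | E x x'} : Set Circle1))).image (fun c => {z | ∃ x' ∈ c, x' ∈ fib d y ∧ E' x' z}) := by
      rw [Finset.image_image]
      intro c hc
      obtain ⟨x, hx, rfl⟩ := Finset.mem_image.1 hc
      refine Finset.mem_image.2 ⟨x, hx, ?_⟩
      ext z
      simp only [Function.comp, Set.mem_ofPred_eq]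
      exact ⟨fun ⟨x', h1, h2, h3⟩ => hE'.trans _ _ _ (h _ hx _ h2 h1) h3, fun hz => ⟨x, hE.refl x (irr x hx), hx, hz⟩⟩
    exact (Finset.card_le_card this).trans Finset.card_image_le
  exact le_antisymm (key _ _ hE' hE fun x hx x' hx' => (h x hx x' hx').2) (key _ _ hE hE' fun x hx x' hx' => (h x hx x' hx').1)

lemma Nn_lt {d : ℕ} (hd : 2 ≤ d) {E : Circle1 → Circle1 → Prop} (hE : EqI E) {y : Circle1} (hy : y ∉ ratC) :
    Nn d E y < d ↔ ∃ x x', md d x = y ∧ md d x' = y ∧ x ≠ x' ∧ E x x' := by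
  classical
  have irr : ∀ x ∈ fib d y, x ∉ ratC := fun x hx => (irr_md hd).1 ((mem_fib hd).1 hx ▸ hy)
  constructor
  · intro h
    unfold Nn at h
    nth_rewrite 2 [← card_fib hd y] at h
    by_contra hc
    push Not at hc
    refine h.ne (Finset.card_image_of_injOn ?_)
    intro x hx x' hx' e
    by_contra hne
    exact hc x x' ((mem_fib hd).1 hx) ((mem_fib hd).1 hx') hne ((hE.cls_eq (irr x' hx')).1 e)
  · rintro ⟨x, x', hx, hx', hne, he⟩
    refine lt_of_le_of_ne (Nn_le hd E y) fun hc => hne ?_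
    unfold Nn at hc
    nth_rewrite 2 [← card_fib hd y] at hc
    have hm := (mem_fib hd).2 hx'
    exact Finset.card_image_iff.1 hc ((mem_fib hd).2 hx) hm ((hE.cls_eq (irr x' hm)).2 he)

lemma Nn_eqv {d : ℕ} (hd : 2 ≤ d) {lam : InvRatLam d} {dg : Set Circle1 → ℕ} (hdg : Unif lam dg)
    {F : Finset (Set Circle1)} (hF : IsFam lam F) {y y' : Circle1} (hy : y ∉ ratC) (hy' : y' ∉ ratC)
    (h : Eqv F y y') : Nn d (Eqv (up lam F)) y = Nn d (Eqv (up lam F)) y' := by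
  classical
  have key : ∀ y y', y ∉ ratC → y' ∉ ratC → Eqv F y y' → Nn d (Eqv (up lam F)) y ≤ Nn d (Eqv (up lam F)) y' := by
    intro y y' hy hy' h
    unfold Nn
    refine Finset.card_le_card fun c hc => ?_
    obtain ⟨x, hx, rfl⟩ := Finset.mem_image.1 hc
    rw [mem_fib hd] at hx
    subst hx
    obtain ⟨x', e1, e2⟩ := eqv_lift hd hdg hF ((irr_md hd).1 hy) hy' h
    refine Finset.mem_image.2 ⟨x', (mem_fib hd).2 e1, ?_⟩
    exact (((eqI_eqv (hF.up hd).good).cls_eq ((irr_md hd).1 (e1 ▸ hy'))).2 e2).symm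
  exact le_antisymm (key _ _ hy hy' h) (key _ _ hy' hy h.symm)

structure Transv (F : Finset (Set Circle1)) (Y : Finset Circle1) : Prop where
  irr : ∀ y ∈ Y, y ∉ ratC
  sep : ∀ y ∈ Y, ∀ z ∈ Y, Eqv F y z → y = z
  tot : ∀ x, x ∉ ratC → ∃ y ∈ Y, Eqv F x y

lemma Transv.card_le {F : Finset (Set Circle1)} {Y Y' : Finset Circle1} (h : Transv F Y) (h' : Transv F Y') :
    Y.card ≤ Y'.card := by
  have : ∀ y : Circle1, ∃ z, y ∈ Y → z ∈ Y' ∧ Eqv F y z := by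
    intro y
    by_cases hy : y ∈ Y
    · obtain ⟨z, h1, h2⟩ := h'.tot y (h.irr y hy); exact ⟨z, fun _ => ⟨h1, h2⟩⟩
    · exact ⟨y, fun h => absurd h hy⟩
  choose f hf using this
  refine Finset.card_le_card_of_injOn f (fun y hy => (hf y hy).1) ?_
  intro y hy z hz e
  refine h.sep y hy z hz ((hf y hy).2.trans ?_)
  rw [e]; exact (hf z hz).2.symm

lemma Transv.card {F : Finset (Set Circle1)} (hF : GoodFam F) {Y : Finset Circle1} (h : Transv F Y) :
    Y.card = 1 + ∑ A ∈ F, (A.ncard - 1) := by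
  obtain ⟨Y', h1, h2, h3, h4⟩ := region_count hF
  have h' : Transv F Y' := ⟨h1, h2, h3⟩
  rw [← h4]
  exact le_antisymm (h.card_le h') (h'.card_le h)

lemma exists_transv {F : Finset (Set Circle1)} (hF : GoodFam F) {Y : Finset Circle1} (h1 : ∀ y ∈ Y, y ∉ ratC)
    (h2 : ∀ y ∈ Y, ∀ z ∈ Y, Eqv F y z → y = z) : ∃ Y', Y ⊆ Y' ∧ Transv F Y' := by
  classical
  obtain ⟨Y0, a1, a2, a3, -⟩ := region_count hF
  refine ⟨Y ∪ Y0.filter (fun y0 => ∀ y ∈ Y, ¬ Eqv F y y0), Finset.subset_union_left, ?_, ?_, ?_⟩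
  · intro y hy
    rcases Finset.mem_union.1 hy with hy | hy
    · exact h1 y hy
    · exact a1 y (Finset.mem_filter.1 hy).1
  · intro y hy z hz e
    rcases Finset.mem_union.1 hy with hy | hy <;> rcases Finset.mem_union.1 hz with hz | hz
    · exact h2 y hy z hz e
    · exact absurd e ((Finset.mem_filter.1 hz).2 y hy)
    · exact absurd e.symm ((Finset.mem_filter.1 hy).2 z hz)
    · exact a2 y (Finset.mem_filter.1 hy).1 z (Finset.mem_filter.1 hz).1 e
  · intro x hx
    obtain ⟨y0, hy0, e⟩ := a3 x hx
    by_cases hc : ∀ y ∈ Y, ¬ Eqv F y y0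
    · exact ⟨y0, Finset.mem_union_right _ (Finset.mem_filter.2 ⟨hy0, hc⟩), e⟩
    · push Not at hc
      obtain ⟨y, hy, e'⟩ := hc
      exact ⟨y, Finset.mem_union_left _ hy, e.trans e'.symm⟩

lemma Nn_transv {d : ℕ} (hd : 2 ≤ d) {lam : InvRatLam d} {dg : Set Circle1 → ℕ} (hdg : Unif lam dg)
    {F : Finset (Set Circle1)} (hF : IsFam lam F) {X : Finset Circle1} (hX : Transv (up lam F) X)
    {y : Circle1} (hy : y ∉ ratC) :
    open Classical in Nn d (Eqv (up lam F)) y = (X.filter (fun x => Eqv F (md d x) y)).card := by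
  classical
  have hE := eqI_eqv (hF.up hd).good
  unfold Nn
  have : (fib d y).image (fun x => ({x' | Eqv (up lam F) x x'} : Set Circle1)) =
      (X.filter (fun x => Eqv F (md d x) y)).image (fun x => ({x' | Eqv (up lam F) x x'} : Set Circle1)) := by
    ext c
    rw [Finset.mem_image, Finset.mem_image]
    constructor
    · rintro ⟨x, hx, rfl⟩
      rw [mem_fib hd] at hx
      subst hx
      have hx := (irr_md hd).1 hy
      obtain ⟨x0, hx0, e⟩ := hX.tot x hx
      refine ⟨x0, Finset.mem_filter.2 ⟨hx0, ?_⟩, ?_⟩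
      · exact eqv_md hd hdg hF (hX.irr x0 hx0) hx e.symm
      · exact (hE.cls_eq hx).2 e.symm
    · rintro ⟨x, hx, rfl⟩
      obtain ⟨hx1, hx2⟩ := Finset.mem_filter.1 hx
      obtain ⟨x', e1, e2⟩ := eqv_lift hd hdg hF (hX.irr x hx1) hy hx2
      exact ⟨x', (mem_fib hd).2 e1, ((hE.cls_eq ((irr_md hd).1 (e1 ▸ hy))).2 e2).symm⟩
  rw [this, Finset.card_image_of_injOn]
  intro x hx x' hx' e
  have h1 := (Finset.mem_filter.1 hx).1
  have h2 := (Finset.mem_filter.1 hx').1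
  exact hX.sep x h1 x' h2 ((hE.cls_eq (hX.irr x' h2)).1 e)

lemma sum_Nn {d : ℕ} (hd : 2 ≤ d) {lam : InvRatLam d} {dg : Set Circle1 → ℕ} (hdg : Unif lam dg)
    {F : Finset (Set Circle1)} (hF : IsFam lam F) {Y : Finset Circle1} (hY : Transv F Y) :
    ∑ y ∈ Y, Nn d (Eqv (up lam F)) y = 1 + ∑ A ∈ up lam F, (A.ncard - 1) := by
  classical
  obtain ⟨X, -, hX⟩ := exists_transv (hF.up hd).good (Y := ∅) (by simp) (by simp)
  rw [← hX.card (hF.up hd).good]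
  have : ∀ y ∈ Y, Nn d (Eqv (up lam F)) y = (X.filter (fun x => Eqv F (md d x) y)).card :=
    fun y hy => Nn_transv hd hdg hF hX (hY.irr y hy)
  rw [Finset.sum_congr rfl this, ← Finset.card_biUnion]
  · congr 1
    ext x
    simp only [Finset.mem_biUnion, Finset.mem_filter]
    constructor
    · rintro ⟨_, _, h, _⟩; exact h
    · intro hx
      obtain ⟨y, hy, e⟩ := hY.tot (md d x) ((irr_md hd).2 (hX.irr x hx))
      exact ⟨y, hy, hx, e⟩
  · intro y hy z hz hne
    rw [Function.onFun, Finset.disjoint_left]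
    intro x h1 h2
    exact hne (hY.sep y hy z hz ((Finset.mem_filter.1 h1).2.symm.trans (Finset.mem_filter.1 h2).2))

lemma sum_over {d : ℕ} (hd : 2 ≤ d) {lam : InvRatLam d} {dg : Set Circle1 → ℕ} (hdg : Unif lam dg)
    {F : Finset (Set Circle1)} (hF : IsFam lam F) {B : Set Circle1} (hB : B ∈ F) :
    open Classical in ∑ A ∈ (up lam F).filter (fun A => md d '' A = B), dg A = d := by
  classical
  obtain ⟨c, hc, rfl⟩ := hF B hB
  conv_rhs => rw [← card_fib hd c]
  rw [Finset.card_eq_sum_card_fiberwise (f := cls lam) (t := (up lam F).filter (fun A => md d '' A = cls lam c))]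
  · refine Finset.sum_congr rfl fun A hA => ?_
    obtain ⟨h1, h2⟩ := Finset.mem_filter.1 hA
    obtain ⟨x, hx, rfl⟩ := hF.up hd A h1
    rw [← (hdg x hx).2 c (by rw [h2]; exact cls_self hc), ← Set.ncard_coe_finset]
    congr 1
    ext s
    simp only [Finset.coe_filter, mem_fib hd, Set.mem_ofPred_eq]
    constructor
    · rintro ⟨h1, h2⟩; exact ⟨h2, (cls_eq h1).symm⟩
    · rintro ⟨h1, h2⟩; exact ⟨h2 ▸ cls_self ((ratC_md hd).1 (h1 ▸ hc)), h1⟩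
  · intro t ht
    have ht' := (mem_fib hd).1 ht
    have htr : t ∈ ratC := (ratC_md hd).1 (ht' ▸ hc)
    refine Finset.mem_coe.2 (Finset.mem_filter.2 ⟨(mem_up_cls hd hF htr).2 (ht' ▸ hB), ?_⟩)
    rw [md_cls htr, ht']

lemma ncard_cls {d : ℕ} {lam : InvRatLam d} {dg : Set Circle1 → ℕ} (hdg : Unif lam dg)
    {x : Circle1} (hx : x ∈ ratC) : (cls lam x).ncard = dg (cls lam x) * (md d '' cls lam x).ncard := by
  classical
  have hf := cls_fin lam x
  rw [Set.ncard_eq_toFinset_card _ hf, Set.ncard_eq_toFinset_card _ (hf.image _)]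
  rw [Finset.card_eq_sum_card_fiberwise (f := md d) (t := (hf.image (md d)).toFinset)]
  · rw [Finset.sum_congr rfl (g := fun _ => dg (cls lam x)), Finset.sum_const, smul_eq_mul, mul_comm]
    intro c hc
    rw [← (hdg x hx).2 c (by simpa using hc), ← Set.ncard_coe_finset]
    congr 1
    ext s
    simp
  · intro t ht
    have ht : t ∈ cls lam x := by simpa using ht
    simpa using ⟨t, ht, rfl⟩

lemma sum_ex {d : ℕ} (hd : 2 ≤ d) {lam : InvRatLam d} {dg : Set Circle1 → ℕ} (hdg : Unif lam dg)
    {F : Finset (Set Circle1)} (hF : IsFam lam F) {Y : Finset Circle1} (hY : Transv F Y) :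
    ∑ y ∈ Y, ((d : ℤ) - Nn d (Eqv (up lam F)) y) = d - 1 - ∑ A ∈ up lam F, ((dg A : ℤ) - 1) := by
  classical
  have h1 := sum_Nn hd hdg hF hY
  have h2 := hY.card hF.good
  have pos : ∀ {G : Finset (Set Circle1)}, IsFam lam G → ∀ A ∈ G, 1 ≤ A.ncard := by
    intro G hG A hA
    exact (Set.ncard_pos (hG.good.fin A hA)).2 (hG.good.ne A hA)
  have c1 : ((∑ A ∈ up lam F, (A.ncard - 1) : ℕ) : ℤ) = ∑ A ∈ up lam F, ((A.ncard : ℤ) - 1) := by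
    rw [Nat.cast_sum]; exact Finset.sum_congr rfl fun A hA => by rw [Nat.cast_sub (pos (hF.up hd) A hA)]; rfl
  have c2 : ((∑ A ∈ F, (A.ncard - 1) : ℕ) : ℤ) = ∑ A ∈ F, ((A.ncard : ℤ) - 1) := by
    rw [Nat.cast_sum]; exact Finset.sum_congr rfl fun A hA => by rw [Nat.cast_sub (pos hF A hA)]; rfl
  have hmap : ∀ A ∈ up lam F, md d '' A ∈ F := by
    intro A hA
    obtain ⟨x, hx, rfl, h⟩ := (mem_up hd hF).1 hA
    rwa [md_cls hx]
  have key : ∑ A ∈ up lam F, ((A.ncard : ℤ) - 1) - ∑ A ∈ up lam F, ((dg A : ℤ) - 1) = d * ∑ B ∈ F, ((B.ncard : ℤ) - 1) := by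
    rw [← Finset.sum_sub_distrib, ← Finset.sum_fiberwise_of_maps_to hmap, Finset.mul_sum]
    refine Finset.sum_congr rfl fun B hB => ?_
    have h3 := sum_over hd hdg hF hB
    have h3' : (∑ A ∈ (up lam F).filter (fun A => md d '' A = B), (dg A : ℤ)) = d := by exact_mod_cast h3
    rw [← h3', Finset.sum_mul]
    refine Finset.sum_congr rfl fun A hA => ?_
    obtain ⟨e1, e2⟩ := Finset.mem_filter.1 hA
    obtain ⟨x, hx, rfl⟩ := hF.up hd A e1
    have := ncard_cls hdg hx
    rw [e2] at this
    rw [this]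
    push_cast
    ring
  rw [Finset.sum_sub_distrib, Finset.sum_const, h2, ← Nat.cast_sum, h1]
  push_cast
  rw [nsmul_eq_mul]
  push_cast
  have c1' := c1
  have c2' := c2
  push_cast at c1' c2'
  rw [c1', c2']
  linarith [key]

lemma sum_ex_le {d : ℕ} (hd : 2 ≤ d) {lam : InvRatLam d} {dg : Set Circle1 → ℕ} (hdg : Unif lam dg)
    {F : Finset (Set Circle1)} (hF : IsFam lam F) {Y : Finset Circle1} (h1 : ∀ y ∈ Y, y ∉ ratC)
    (h2 : ∀ y ∈ Y, ∀ z ∈ Y, Eqv F y z → y = z) :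
    ∑ y ∈ Y, ((d : ℤ) - Nn d (Eqv (up lam F)) y) ≤ d - 1 - ∑ A ∈ up lam F, ((dg A : ℤ) - 1) := by
  obtain ⟨Y', hs, hY'⟩ := exists_transv hF.good h1 h2
  rw [← sum_ex hd hdg hF hY']
  refine Finset.sum_le_sum_of_subset_of_nonneg hs fun y _ _ => ?_
  have := Nn_le hd (Eqv (up lam F)) y
  omega

lemma Unl.eqv {d : ℕ} {lam : InvRatLam d} {x y : Circle1} (h : Unl lam x y) {F : Finset (Set Circle1)} (hF : IsFam lam F) :
    Eqv F x y := fun A hA => by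
  obtain ⟨z, hz, rfl⟩ := hF A hA; exact h z hz

lemma isFam_single {d : ℕ} {lam : InvRatLam d} {z : Circle1} (hz : z ∈ ratC) : IsFam lam {cls lam z} :=
  fun A hA => ⟨z, hz, Finset.mem_singleton.1 hA⟩

lemma up_mono {d : ℕ} (hd : 2 ≤ d) {lam : InvRatLam d} {F F' : Finset (Set Circle1)} (hF : IsFam lam F) (hF' : IsFam lam F')
    (h : F ⊆ F') : up lam F ⊆ up lam F' := fun A hA => by
  obtain ⟨x, hx, e, h'⟩ := (mem_up hd hF).1 hA
  exact (mem_up hd hF').2 ⟨x, hx, e, h h'⟩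

lemma unl_md {d : ℕ} (hd : 2 ≤ d) {lam : InvRatLam d} {dg : Set Circle1 → ℕ} (hdg : Unif lam dg) {x x' : Circle1}
    (h : Unl lam x x') : Unl lam (md d x) (md d x') := fun z hz =>
  eqv_md hd hdg (isFam_single hz) h.left h.right (h.eqv ((isFam_single hz).up hd)) _ (Finset.mem_singleton_self _)

open Classical in
lemma IsFam.union {d : ℕ} {lam : InvRatLam d} {F F' : Finset (Set Circle1)} (hF : IsFam lam F) (hF' : IsFam lam F') :
    IsFam lam (F ∪ F') := fun A hA => (Finset.mem_union.1 hA).elim (hF A) (hF' A)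

lemma exists_stab {d : ℕ} (hd : 2 ≤ d) (lam : InvRatLam d) (P : Finset Circle1) :
    ∃ F, IsFam lam F ∧ ∀ x ∈ P, ∀ x' ∈ P, (Eqv F x x' → Unl lam x x') ∧ (Eqv (up lam F) x x' → Unl lam x x') := by
  classical
  have : ∀ p : Circle1 × Circle1, ∃ z, z ∈ ratC ∧ (Same (cls lam z) p.1 p.2 → Unl lam p.1 p.2) := by
    intro p
    by_cases h : Unl lam p.1 p.2
    · exact ⟨0, ⟨0, by simp⟩, fun _ => h⟩
    · have h' := h
      unfold Unl at h'
      push Not at h'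
      obtain ⟨z, hz, hn⟩ := h'
      exact ⟨z, hz, fun e => absurd e hn⟩
  choose f hf1 hf2 using this
  let F := (P ×ˢ P).image (fun p => cls lam (f p)) ∪ (P ×ˢ P).image (fun p => cls lam (md d (f p)))
  have hF : IsFam lam F := by
    intro A hA
    rcases Finset.mem_union.1 hA with h | h
    · obtain ⟨p, _, rfl⟩ := Finset.mem_image.1 h; exact ⟨_, hf1 p, rfl⟩
    · obtain ⟨p, _, rfl⟩ := Finset.mem_image.1 h; exact ⟨_, (ratC_md hd).2 (hf1 p), rfl⟩
  refine ⟨F, hF, fun x hx x' hx' => ⟨fun h => hf2 (x, x') (h _ ?_), fun h => hf2 (x, x') (h _ ?_)⟩⟩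
  · exact Finset.mem_union_left _ (Finset.mem_image.2 ⟨(x, x'), Finset.mem_product.2 ⟨hx, hx'⟩, rfl⟩)
  · rw [mem_up_cls hd hF (hf1 _)]
    exact Finset.mem_union_right _ (Finset.mem_image.2 ⟨(x, x'), Finset.mem_product.2 ⟨hx, hx'⟩, rfl⟩)

lemma unl_lift {d : ℕ} (hd : 2 ≤ d) {lam : InvRatLam d} {dg : Set Circle1 → ℕ} (hdg : Unif lam dg) {x y' : Circle1}
    (h : Unl lam (md d x) y') : ∃ x', md d x' = y' ∧ Unl lam x x' := by
  classical
  obtain ⟨F, hF, hs⟩ := exists_stab hd lam (insert x (fib d y'))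
  obtain ⟨x', h1, h2⟩ := eqv_lift hd hdg hF ((irr_md hd).1 h.left) h.right (h.eqv hF)
  exact ⟨x', h1, (hs x (Finset.mem_insert_self _ _) x' (Finset.mem_insert_of_mem ((mem_fib hd).2 h1))).2 h2⟩

/-! ### gap lemma -/

lemma cross {d : ℕ} {lam : InvRatLam d} {u p q p' q' : Circle1} (h : lam.rel p q) (h' : lam.rel p' q')
    (h1 : cD u p < cD u p') (h2 : cD u p' < cD u q) (h3 : cD u q < cD u q') : lam.rel p p' := by
  by_contra hn
  have hs := rel_same hn h'
  have e1 := cD_sub h1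
  have e2 := cD_sub h2
  have e3 := cD_sub (h2.trans h3)
  have hne : p ≠ p' := by rintro rfl; exact lt_irrefl _ h1
  have e4 := cD_symm hne
  exact not_same (A := cls lam p) (x := p') (y := q') h (cls_self (lam.rel_rat _ _ h).1) (by linarith)
    (by linarith [cD_le u q', cD_pos u p]) hs

def GW {d : ℕ} (lam : InvRatLam d) (u : Circle1) (l : ℝ) : Set ℝ :=
  {s | ∃ p q, lam.rel p q ∧ cD u p < s ∧ s < cD u q ∧ cD u q < l}

lemma isOpen_GW {d : ℕ} (lam : InvRatLam d) (u : Circle1) (l : ℝ) : IsOpen (GW lam u l) := by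
  rw [isOpen_iff_mem_nhds]
  rintro s ⟨p, q, h, h1, h2, h3⟩
  filter_upwards [isOpen_Ioo.mem_nhds (show s ∈ Set.Ioo (cD u p) (cD u q) from ⟨h1, h2⟩)] with t ht
  exact ⟨p, q, h, ht.1, ht.2, h3⟩

lemma GW_leaf {d : ℕ} {lam : InvRatLam d} {u : Circle1} {l c1 c2 : ℝ} (hc : c1 ≤ c2) (h : Set.Icc c1 c2 ⊆ GW lam u l) :
    ∃ p q, lam.rel p q ∧ cD u p < c1 ∧ c2 < cD u q ∧ cD u q < l := by
  let T : Set ℝ := {c | c ∈ Set.Icc c1 c2 ∧ ∃ p q, lam.rel p q ∧ cD u p < c1 ∧ c < cD u q ∧ cD u q < l}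
  have h1 : c1 ∈ T := by
    obtain ⟨p, q, a, b, c, e⟩ := h ⟨le_rfl, hc⟩
    exact ⟨⟨le_rfl, hc⟩, p, q, a, b, c, e⟩
  have hb : BddAbove T := ⟨c2, fun c hc => hc.1.2⟩
  have hs1 : c1 ≤ sSup T := le_csSup hb h1
  have hs2 : sSup T ≤ c2 := csSup_le ⟨c1, h1⟩ fun c hc => hc.1.2
  obtain ⟨p', q', a', b', c', e'⟩ := h ⟨hs1, hs2⟩
  have key : ∃ p q, lam.rel p q ∧ cD u p < c1 ∧ cD u q' ≤ cD u q ∧ cD u q < l := by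
    by_cases hp' : cD u p' < c1
    · exact ⟨p', q', a', hp', le_rfl, e'⟩
    push Not at hp'
    obtain ⟨c, hcT, hc'⟩ := exists_lt_of_lt_csSup ⟨c1, h1⟩ b'
    obtain ⟨-, p, q, a, b, c, e⟩ := hcT
    by_cases hq : cD u q' ≤ cD u q
    · exact ⟨p, q, a, b, hq, e⟩
    push Not at hq
    have hr := cross a a' (lt_of_lt_of_le b hp') (hc'.trans c) hq
    exact ⟨p, q', lam.trans _ _ _ hr a', b, le_rfl, e'⟩
  obtain ⟨p, q, a, b, c, e⟩ := key
  by_cases hq : c2 < cD u q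
  · exact ⟨p, q, a, b, hq, e⟩
  push Not at hq
  exfalso
  have hlt : sSup T < cD u q := lt_of_lt_of_le c' c
  obtain ⟨m, hm1, hm2⟩ := exists_between hlt
  have : m ∈ T := ⟨⟨hs1.trans hm1.le, hm2.le.trans hq⟩, p, q, a, b, hm2, e⟩
  exact absurd (le_csSup hb this) (not_le.2 hm1)

lemma gap {d : ℕ} (hd : 2 ≤ d) {lam : InvRatLam d} {u v : Circle1}
    (H : ∀ t, t ∉ ratC → cD u t < cD u v → ∃ p q, lam.rel p q ∧ cD u p < cD u t ∧ cD u t < cD u q ∧ cD u q < cD u v)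
    (hu : u ∈ ratC → ∀ p, lam.rel u p → ¬ cD u p < cD u v)
    (hv : v ∈ ratC → ∀ p, lam.rel v p → ¬ cD u p < cD u v) {c1 c2 : ℝ} (hc1 : 0 < c1) (hc2 : c2 < cD u v) :
    ∃ p q, lam.rel p q ∧ cD u p < c1 ∧ c2 < cD u q ∧ cD u q < cD u v := by
  by_contra hcon
  set l := cD u v with hl
  have hl0 : 0 < l := cD_pos _ _
  have hl1 : l ≤ 1 := cD_le _ _
  let pt : ℝ → Circle1 := fun s => u + (s : Circle1)
  have hpt : Continuous pt := continuous_const.add (AddCircle.continuous_mk' 1)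
  have hcpt : ∀ s, 0 < s → s ≤ l → cD u (pt s) = s := fun s h0 h1 => cD_add h0 (h1.trans hl1)
  have hptc : ∀ p, pt (cD u p) = p := fun p => cD_coe u p
  let K : Set ℝ := Set.Icc 0 l \ GW lam u l
  have hKc : IsCompact K := isCompact_Icc.diff (isOpen_GW lam u l)
  have h0K : (0:ℝ) ∈ K := ⟨⟨le_rfl, hl0.le⟩, fun ⟨p, q, _, h, _, _⟩ => absurd h (not_lt.2 (cD_pos u p).le)⟩
  have hlK : l ∈ K := ⟨⟨hl0.le, le_rfl⟩, fun ⟨p, q, _, _, h, h'⟩ => lt_asymm h h'⟩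
  have hKrat : ∀ s ∈ K, 0 < s → s < l → pt s ∈ ratC := by
    intro s hs h0 h1
    by_contra hr
    have e := hcpt s h0 h1.le
    obtain ⟨p, q, a, b, c, f⟩ := H (pt s) hr (by rw [e]; exact h1)
    rw [e] at b c
    exact hs.2 ⟨p, q, a, b, c, f⟩
  -- consecutive points
  have hcons : ∀ s1 ∈ K, ∀ s2 ∈ K, s1 < s2 → Set.Ioo s1 s2 ⊆ GW lam u l →
      0 < s1 ∧ s2 < l ∧ lam.rel (pt s1) (pt s2) := by
    intro s1 hs1 s2 hs2 hlt hsub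
    have hleaf : ∀ b1 b2, s1 < b1 → b2 < s2 → ∃ p q, lam.rel p q ∧ s1 ≤ cD u p ∧ cD u p < b1 ∧ b2 < cD u q ∧ cD u q ≤ s2 ∧ cD u q < l := by
      intro b1 b2 hb1 hb2
      obtain ⟨b1', e1, e2⟩ := exists_between (lt_min hb1 hlt)
      obtain ⟨b2', e3, e4⟩ := exists_between (max_lt hb2 (e2.trans_le (min_le_right _ _)))
      have e5 : b1' ≤ b2' := (le_max_right _ _).trans e3.le
      obtain ⟨p, q, a, b, c, e⟩ := GW_leaf e5 (fun t ht => hsub ⟨e1.trans_le ht.1, ht.2.trans_lt e4⟩)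
      refine ⟨p, q, a, ?_, b.trans (e2.trans_le (min_le_left _ _)), ((le_max_left _ _).trans_lt e3).trans c, ?_, e⟩
      · by_contra hn
        push Not at hn
        exact hs1.2 ⟨p, q, a, hn, by linarith, e⟩
      · by_contra hn
        push Not at hn
        exact hs2.2 ⟨p, q, a, by linarith, hn, e⟩
    have hCl : Cl lam (pt s1) (pt s2) := by
      refine Cl.of_approx fun U hU V hV => ?_
      obtain ⟨r1, hr1, hr1'⟩ := Metric.mem_nhds_iff.1 (hpt.continuousAt.preimage_mem_nhds hU)
      obtain ⟨r2, hr2, hr2'⟩ := Metric.mem_nhds_iff.1 (hpt.continuousAt.preimage_mem_nhds hV)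
      obtain ⟨p, q, a, b, c, e, f, g⟩ := hleaf (s1 + r1) (s2 - r2) (by linarith) (by linarith)
      refine ⟨p, ?_, q, ?_, a⟩
      · rw [← hptc p]; exact hr1' (by rw [Metric.mem_ball, Real.dist_eq, abs_lt]; constructor <;> linarith)
      · rw [← hptc q]; exact hr2' (by rw [Metric.mem_ball, Real.dist_eq, abs_lt]; constructor <;> linarith)
    have hs1' : 0 ≤ s1 := hs1.1.1
    have hs2' : s2 ≤ l := hs2.1.2
    have hpl : pt l = v := cD_coe u v
    have hp0 : pt 0 = u := by simp [pt]
    rcases hs1'.eq_or_lt with e0 | hs1p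
    · subst e0
      rcases hs2'.eq_or_lt with e1 | hs2l
      · subst e1
        obtain ⟨p, q, a, b, c, e, f, g⟩ := hleaf c1 c2 hc1 hc2
        exact absurd ⟨p, q, a, c, e, g⟩ hcon
      · rw [hp0] at hCl
        have hur := (hCl.rat_iff hd).2 (hKrat s2 hs2 hlt hs2l)
        exact absurd (by rw [hcpt s2 hlt hs2l.le]; exact hs2l) (hu hur _ (hCl.rel hd hur))
    · rcases hs2'.eq_or_lt with e1 | hs2l
      · have hs1l : s1 < l := by linarith
        rw [e1, hpl] at hCl
        have hur := (hCl.rat_iff hd).1 (hKrat s1 hs1 hs1p hs1l)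
        exact absurd (by rw [hcpt s1 hs1p hs1l.le]; exact hs1l) (hv hur _ (hCl.symm.rel hd hur))
      · exact ⟨hs1p, hs2l, hCl.rel hd (hKrat s1 hs1 hs1p (hlt.trans hs2l))⟩
  -- countability
  have hcount : K.Countable := by
    refine Set.Countable.mono (s₂ := {0, l} ∪ cD u '' ratC) ?_ ?_
    · intro s hs
      rcases (show 0 ≤ s from hs.1.1).eq_or_lt with e | h0
      · left; left; exact e.symm
      rcases (show s ≤ l from hs.1.2).eq_or_lt with e | h1
      · left; right; exact e
      · right; exact ⟨pt s, hKrat s hs h0 h1, hcpt s h0 h1.le⟩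
    · exact ((Set.finite_singleton _).insert _).countable.union (ratC_countable.image _)
  have : Countable K := hcount.to_subtype
  have : Nonempty K := ⟨⟨0, h0K⟩⟩
  have : CompleteSpace K := hKc.isClosed.completeSpace_coe
  obtain ⟨i, hi⟩ := nonempty_interior_of_iUnion_of_closed (f := fun i : K => ({i} : Set K))
    (fun i => isClosed_singleton) (by ext x; simp)
  have hiO : ({i} : Set K) ∈ nhds i := by
    obtain ⟨j, hj⟩ := hi
    have : j = i := Set.mem_singleton_iff.1 (interior_subset hj)
    subst this
    exact mem_interior_iff_mem_nhds.1 hj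
  obtain ⟨r, hr, hball⟩ := Metric.mem_nhds_iff.1 hiO
  obtain ⟨s, hsK⟩ := i
  have hiso : ∀ t ∈ K, |t - s| < r → t = s := by
    intro t ht h
    have := hball (show (⟨t, ht⟩ : K) ∈ Metric.ball ⟨s, hsK⟩ r from by
      rw [Metric.mem_ball, Subtype.dist_eq, Real.dist_eq]; exact h)
    exact congrArg Subtype.val this
  have right : s < l → ∃ s2 ∈ K, s < s2 ∧ Set.Ioo s s2 ⊆ GW lam u l := by
    intro hsl
    have hc : IsCompact (K ∩ Set.Ici (s + r)) := hKc.inter_right isClosed_Ici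
    have hne : (K ∩ Set.Ici (s + r)).Nonempty := by
      refine ⟨l, hlK, ?_⟩
      by_contra hn
      rw [Set.mem_Ici, not_le] at hn
      exact hsl.ne' (hiso l hlK (by rw [abs_lt]; constructor <;> linarith))
    obtain ⟨s2, hs2, hmin⟩ := hc.exists_isLeast hne
    have : s + r ≤ s2 := hs2.2
    refine ⟨s2, hs2.1, by linarith, fun t ht => ?_⟩
    by_contra hn
    have htK : t ∈ K := ⟨⟨hsK.1.1.trans ht.1.le, ht.2.le.trans hs2.1.1.2⟩, hn⟩
    by_cases htr : s + r ≤ t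
    · exact absurd (hmin ⟨htK, htr⟩) (not_le.2 ht.2)
    · exact ht.1.ne' (hiso t htK (by rw [abs_lt]; constructor <;> linarith [ht.1]))
  have left : 0 < s → ∃ s1 ∈ K, s1 < s ∧ Set.Ioo s1 s ⊆ GW lam u l := by
    intro hsl
    have hc : IsCompact (K ∩ Set.Iic (s - r)) := hKc.inter_right isClosed_Iic
    have hne : (K ∩ Set.Iic (s - r)).Nonempty := by
      refine ⟨0, h0K, ?_⟩
      by_contra hn
      rw [Set.mem_Iic, not_le] at hn
      exact hsl.ne (hiso 0 h0K (by rw [abs_lt]; constructor <;> linarith))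
    obtain ⟨s1, hs1, hmax⟩ := hc.exists_isGreatest hne
    have : s1 ≤ s - r := hs1.2
    refine ⟨s1, hs1.1, by linarith, fun t ht => ?_⟩
    by_contra hn
    have htK : t ∈ K := ⟨⟨hs1.1.1.1.trans ht.1.le, ht.2.le.trans hsK.1.2⟩, hn⟩
    by_cases htr : t ≤ s - r
    · exact absurd (hmax ⟨htK, htr⟩) (not_le.2 ht.1)
    · exact ht.2.ne (hiso t htK (by rw [abs_lt]; constructor <;> linarith [ht.2]))
  have hs0 : 0 ≤ s := hsK.1.1
  have hsl : s ≤ l := hsK.1.2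
  rcases hsl.eq_or_lt with e | hsl
  · obtain ⟨s1, a, b, c⟩ := left (by linarith)
    have := hcons s1 a s hsK b c
    linarith [this.2.1]
  · obtain ⟨s2, a, b, c⟩ := right hsl
    obtain ⟨f1, f2, f3⟩ := hcons s hsK s2 a b c
    obtain ⟨s1, a', b', c'⟩ := left f1
    obtain ⟨g1, g2, g3⟩ := hcons s1 a' s hsK b' c'
    refine hsK.2 ⟨pt s1, pt s2, lam.trans _ _ _ g3 f3, ?_, ?_, ?_⟩
    · rw [hcpt s1 g1 (by linarith)]; exact b'
    · rw [hcpt s2 (by linarith) (by linarith)]; exact b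
    · rw [hcpt s2 (by linarith) (by linarith)]; exact f2

lemma exists_sep {A : Set Circle1} {x y : Circle1} (hx : x ∉ A) (hy : y ∉ A) (h : ¬ Same A x y) :
    ∃ a ∈ A, ∃ b ∈ A, cD x a < cD x y ∧ cD x y < cD x b := by
  have h1 : ∃ a ∈ A, cD x a < cD x y := by
    by_contra hc; push Not at hc
    exact h (same_of_arc hx hy fun t ht => not_lt.2 (hc t ht))
  have h2 : ∃ b ∈ A, cD y b < cD y x := by
    by_contra hc; push Not at hc
    exact h (same_of_arc hy hx fun t ht => not_lt.2 (hc t ht)).symm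
  obtain ⟨a, ha, ha'⟩ := h1
  obtain ⟨b, hb, hb'⟩ := h2
  refine ⟨a, ha, b, hb, ha', ?_⟩
  have hne : x ≠ y := by
    rintro rfl; exact h (Same.refl hx)
  have := cD_symm hne
  have := cD_pos y b
  rcases cD_cases x y b with e | e <;> linarith [e.1, e.2]

def EE {d : ℕ} (lam : InvRatLam d) (a b : Circle1) : Prop :=
  ∀ c1 c2 : ℝ, 0 < c1 → c2 < cD a b → ∃ p q, lam.rel p q ∧ cD a p < c1 ∧ c2 < cD a q ∧ cD a q < cD a b

lemma EE.cl {d : ℕ} {lam : InvRatLam d} {a b : Circle1} (h : EE lam a b) : Cl lam a b := by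
  refine Cl.of_approx fun U hU V hV => ?_
  obtain ⟨e1, he1, h1⟩ := nhds_cD' hU
  obtain ⟨e2, he2, h2⟩ := nhds_cD' hV
  obtain ⟨p, q, a1, a2, a3, a4⟩ := h e1 (cD a b - e2) he1 (by linarith)
  refine ⟨p, h1 p (Or.inl a2), q, h2 q (Or.inr ?_), a1⟩
  have := cD_sub a4
  linarith

lemma cl_EE {d : ℕ} {lam : InvRatLam d} {a b : Circle1} (h : Cl lam a b) (ha : a ∉ ratC) (hb : b ∉ ratC) (hab : a ≠ b) :
    EE lam a b ∨ EE lam b a := by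
  by_contra hc
  push Not at hc
  obtain ⟨hc1, hc2⟩ := hc
  unfold EE at hc1 hc2
  push Not at hc1 hc2
  obtain ⟨c1, c2, hp1, hp2, hn⟩ := hc1
  obtain ⟨c1', c2', hp1', hp2', hn'⟩ := hc2
  have hs := cD_symm hab
  have pab := cD_pos a b
  have pba := cD_pos b a
  obtain ⟨e, he, m⟩ : ∃ e > 0, e ≤ c1 ∧ e ≤ c1' ∧ e ≤ cD a b - c2 ∧ e ≤ cD b a - c2' ∧ e ≤ cD a b ∧ e ≤ cD b a := by
    refine ⟨min c1 (min c1' (min (cD a b - c2) (min (cD b a - c2') (min (cD a b) (cD b a))))), ?_, ?_⟩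
    · simp only [gt_iff_lt, lt_min_iff]
      refine ⟨hp1, hp1', by linarith, by linarith, pab, pba⟩
    · refine ⟨?_, ?_, ?_, ?_, ?_, ?_⟩ <;> simp
  obtain ⟨m1, m2, m3, m4, m5, m6⟩ := m
  obtain ⟨p, q, hr, hp, hq⟩ := h.approx (nhds_cD a he) (nhds_cD b he)
  have hpr := (lam.rel_rat _ _ hr).1
  have hqr := (lam.rel_rat _ _ hr).2
  have hsame : Same (cls lam p) a b := h.same (irr_nmem ha) (irr_nmem hb)
  have hpA : p ∈ cls lam p := cls_self hpr
  have hqA : q ∈ cls lam p := hr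
  have hpa : a ≠ p := fun e => ha (e ▸ hpr)
  have hqb : b ≠ q := fun e => hb (e ▸ hqr)
  have s1 := cD_symm hpa
  have s2 := cD_symm hqb
  rcases hp with rfl | hp | hp
  · exact ha hpr
  · rcases hq with rfl | hq | hq
    · exact hb hqr
    · -- right right
      refine not_same hpA hqA (by linarith) ?_ hsame
      have := cD_pos b q
      rcases cD_cases a b q with e | e <;> linarith [e.1, e.2]
    · have k := cD_sub' (x := a) (y := q) (z := b) (by linarith)
      have := hn p q hr (by linarith) (by linarith)
      linarith [cD_pos q b]
  · rcases hq with rfl | hq | hq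
    · exact hb hqr
    · have k := cD_sub' (x := b) (y := p) (z := a) (by linarith)
      have := hn' q p (lam.symm _ _ hr) (by linarith) (by linarith)
      linarith [cD_pos p a]
    · have k := cD_sub' (x := a) (y := q) (z := b) (by linarith)
      exact not_same hqA hpA (by linarith [cD_pos q b]) (by linarith) hsame

lemma EE.md {d : ℕ} (hd : 2 ≤ d) {lam : InvRatLam d} {a b : Circle1} (h : EE lam a b) : EE lam (md d a) (md d b) := by
  have hd' : (2:ℝ) ≤ d := by exact_mod_cast hd
  intro C1 C2 hC1 hC2
  set l := cD (_root_.md d a) (_root_.md d b) with hl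
  have hl0 : 0 < l := cD_pos _ _
  obtain ⟨η, hη, m1, m2⟩ : ∃ η > 0, η ≤ l ∧ η ≤ l - C2 := ⟨min l (l - C2), lt_min hl0 (by linarith), min_le_left _ _, min_le_right _ _⟩
  obtain ⟨p, q, hr, h1, h2, h3⟩ := h (C1 / d) (cD a b - η / d) (by positivity) (by linarith [show 0 < η / d by positivity])
  have e := cD_sub h3
  have f1 := cD_md_le hd a p
  have f2 := cD_md_le hd q b
  rw [lt_div_iff₀ (by positivity)] at h1
  have h4 : cD q b < η / d := by linarith
  rw [lt_div_iff₀ (by positivity)] at h4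
  have f3 := cD_sub' (x := _root_.md d a) (y := _root_.md d q) (z := _root_.md d b) (by linarith)
  have := cD_pos (_root_.md d q) (_root_.md d b)
  exact ⟨_, _, rel_md hr, by linarith, by linarith, by linarith⟩

lemma EE.free {d : ℕ} {lam : InvRatLam d} {a b z : Circle1} (h : EE lam a b) (hz : Unl lam a z) : ¬ cD a z < cD a b := by
  intro hlt
  obtain ⟨p, q, hr, h1, h2, -⟩ := h (cD a z) (cD a z) (cD_pos _ _) hlt
  have hpr := (lam.rel_rat _ _ hr).1
  exact not_same (cls_self hpr) hr h1 h2 (hz p hpr)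

def RR {d : ℕ} (lam : InvRatLam d) (a b : Circle1) : Prop := Unl lam a b ∧ EE lam a b

lemma RR.right_unique {d : ℕ} (lam : InvRatLam d) : Relator.RightUnique (RR lam) := by
  intro a b c hb hc
  exact cD_inj (le_antisymm (not_lt.1 (hb.2.free hc.1)) (not_lt.1 (hc.2.free hb.1)))

lemma RR.left_unique {d : ℕ} (lam : InvRatLam d) : Relator.RightUnique (Function.swap (RR lam)) := by
  intro c a b ha hb
  have ha' : RR lam a c := ha
  have hb' : RR lam b c := hb
  have k1 := not_lt.1 (ha'.2.free (ha'.1.trans hb'.1.symm))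
  have k2 := not_lt.1 (hb'.2.free (hb'.1.trans ha'.1.symm))
  have k3 := cD_le a c
  have k4 := cD_le b c
  refine pred_uniq (B := {a, b}) (v := c) (by simp) (by simp) ?_ ?_
  · rintro x (rfl | rfl)
    · rw [cD_self]; exact k3
    · exact k1
  · rintro x (rfl | rfl)
    · exact k2
    · rw [cD_self]; exact k4

lemma realExt_RR {d : ℕ} (hd : 2 ≤ d) {lam : InvRatLam d} {a b : Circle1} (h : realExt lam.rel a b) (ha : a ∉ ratC) :
    Relation.ReflTransGen (RR lam) a b ∨ Relation.ReflTransGen (RR lam) b a := by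
  unfold realExt at h
  induction h with
  | rel x y h =>
    have hy : y ∉ ratC := fun hy => ha ((Cl.rat_iff hd h).2 hy)
    have hu : Unl lam x y := fun z _ => Cl.same h (irr_nmem ha) (irr_nmem hy)
    by_cases hxy : x = y
    · subst hxy; exact Or.inl .refl
    rcases cl_EE h ha hy hxy with e | e
    · exact Or.inl (.single ⟨hu, e⟩)
    · exact Or.inr (.single ⟨hu.symm, e⟩)
  | refl x => exact Or.inl .refl
  | symm x y h ih => exact (ih (fun h' => ha ((realExt_rat hd h).1.1 h'))).symm
  | trans x y z h1 h2 ih1 ih2 =>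
    have hy : y ∉ ratC := fun h' => ha ((realExt_rat hd h1).1.2 h')
    rcases ih1 ha with p | p <;> rcases ih2 hy with q | q
    · exact Or.inl (p.trans q)
    · have p' := Relation.reflTransGen_swap.2 p
      have q' := Relation.reflTransGen_swap.2 q
      rcases Relation.ReflTransGen.total_of_right_unique (RR.left_unique lam) p' q' with e | e
      · exact Or.inr (Relation.reflTransGen_swap.1 e)
      · exact Or.inl (Relation.reflTransGen_swap.1 e)
    · exact Relation.ReflTransGen.total_of_right_unique (RR.right_unique lam) p q
    · exact Or.inr (q.trans p)

lemma cyc_fin {d : ℕ} {lam : InvRatLam d} {a b : Circle1} (h : Relation.TransGen (RR lam) a b) :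
    Unl lam a b ∧ ∃ Φ : Set Circle1, Φ.Finite ∧ ∀ z, Unl lam a z → z ∈ Φ ∨ cD b z < cD a z := by
  have step : ∀ a b z, RR lam a b → Unl lam a z → z = b ∨ cD b z < cD a z := by
    intro a b z h hz
    rcases (not_lt.1 (h.2.free hz)).eq_or_lt with e | e
    · exact Or.inl (cD_inj e).symm
    · right; have := cD_sub e; linarith [cD_pos a b]
  induction h with
  | single h => exact ⟨h.1, {_}, Set.finite_singleton _, fun z hz => step _ _ z h hz⟩
  | @tail b2 c2 h1 h2 ih =>
    obtain ⟨i0, Φ, i1, i2⟩ := ih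
    refine ⟨i0.trans h2.1, insert c2 Φ, i1.insert c2, fun z hz => ?_⟩
    rcases i2 z hz with h | h
    · exact Or.inl (Or.inr h)
    · rcases step _ _ z h2 (i0.symm.trans hz) with h' | h'
      · exact Or.inl (Or.inl h')
      · exact Or.inr (h'.trans h)

lemma unl_fin_of_md {d : ℕ} (hd : 2 ≤ d) {lam : InvRatLam d} {dg : Set Circle1 → ℕ} (hdg : Unif lam dg) {a : Circle1}
    (h : {z | Unl lam (md d a) z}.Finite) : {z | Unl lam a z}.Finite := by
  have : (⋃ p ∈ {z | Unl lam (md d a) z}, (fib d p : Set Circle1)).Finite := h.biUnion fun p _ => (fib d p).finite_toSet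
  refine this.subset fun z hz => ?_
  simp only [Set.mem_iUnion]
  exact ⟨md d z, unl_md hd hdg hz, (mem_fib hd).2 rfl⟩

lemma realExt_inj {d : ℕ} (hd : 2 ≤ d) {lam : InvRatLam d} {dg : Set Circle1 → ℕ} (hdg : Unif lam dg) {a b : Circle1}
    (ha : a ∉ ratC) (h : realExt lam.rel a b) (hinf : ¬ {z | Unl lam a z}.Finite) (hm : md d a = md d b) : a = b := by
  by_contra hne
  apply hinf
  apply unl_fin_of_md hd hdg
  have lift : ∀ a b, Relation.TransGen (RR lam) a b → Relation.TransGen (RR lam) (md d a) (md d b) := fun a b h =>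
    h.lift (md d) fun x y h => ⟨unl_md hd hdg h.1, h.2.md hd⟩
  have cyc : Relation.TransGen (RR lam) (md d a) (md d a) := by
    rcases realExt_RR hd h ha with e | e
    · rcases Relation.reflTransGen_iff_eq_or_transGen.1 e with e | e
      · exact absurd e.symm hne
      · have := lift _ _ e; rwa [← hm] at this
    · rcases Relation.reflTransGen_iff_eq_or_transGen.1 e with e | e
      · exact absurd e hne
      · have := lift _ _ e; rwa [← hm] at this
  obtain ⟨-, Φ, h1, h2⟩ := cyc_fin cyc
  refine h1.subset fun z hz => ?_
  rcases h2 z hz with e | e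
  · exact e
  · exact absurd e (lt_irrefl _)

lemma unl_fin_realExt {d : ℕ} (hd : 2 ≤ d) {lam : InvRatLam d} {θ : Circle1}
    (hfin : {z | Unl lam θ z}.Finite) : ∀ a b, Unl lam θ a → Unl lam θ b → realExt lam.rel a b := by
  suffices H : ∀ n : ℕ, ∀ a b, Unl lam θ a → Unl lam θ b → ({z | Unl lam θ z} ∩ {z | cD a z < cD a b}).ncard = n →
      realExt lam.rel a b from fun a b ha hb => H _ a b ha hb rfl
  intro n
  induction n using Nat.strong_induction_on with
  | _ n ih =>
  intro a b ha hb hn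
  have hfin' : ({z | Unl lam θ z} ∩ {z | cD a z < cD a b}).Finite := hfin.inter_of_left _
  by_cases hempty : ∀ w, Unl lam θ w → ¬ cD a w < cD a b
  · by_cases hab : a = b
    · subst hab; exact Relation.EqvGen.refl _
    refine Relation.EqvGen.rel _ _ (EE.cl (lam := lam) ?_)
    intro c1 c2 hc1 hc2
    refine gap hd ?_ (fun h => absurd h ha.right) (fun h => absurd h hb.right) hc1 hc2
    intro t ht htb
    have hnu : ¬ Unl lam a t := fun h => hempty t (ha.trans h) htb
    unfold Unl at hnu
    push Not at hnu
    obtain ⟨z, hz, hns⟩ := hnu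
    obtain ⟨p, hp, q, hq, h1, h2⟩ := exists_sep (irr_nmem ha.right) (irr_nmem ht) hns
    refine ⟨p, q, lam.trans _ _ _ (lam.symm _ _ hp) hq, h1, h2, ?_⟩
    by_contra hc
    push Not at hc
    rcases hc.eq_or_lt with e | e
    · exact hb.right (cD_inj e ▸ cls_rat hq)
    · exact not_same hp hq (h1.trans htb) e ((ha.symm.trans hb) z hz)
  · push Not at hempty
    obtain ⟨w, hw, hlt⟩ := hempty
    have e := cD_sub hlt
    have p0 := cD_pos a w
    refine Relation.EqvGen.trans _ w _ (ih _ ?_ a w ha hw rfl) (ih _ ?_ w b hw hb rfl)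
    · rw [← hn]
      refine Set.ncard_lt_ncard ⟨fun t ht => ⟨ht.1, lt_trans ht.2 hlt⟩, fun hc => ?_⟩ hfin'
      have h2 : cD a w < cD a w := (hc ⟨hw, hlt⟩).2
      exact lt_irrefl _ h2
    · rw [← hn]
      refine Set.ncard_lt_ncard ⟨fun t ht => ⟨ht.1, ?_⟩, fun hc => ?_⟩ hfin'
      · have h2 : cD w t < cD w b := ht.2
        change cD a t < cD a b
        rcases cD_cases a w t with f | f <;> linarith [f.1, f.2, cD_le a b]
      · have h2 : cD w w < cD w b := (hc ⟨hw, hlt⟩).2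
        rw [cD_self] at h2
        linarith [cD_le w b]

lemma critElem_iff {d : ℕ} (hd : 2 ≤ d) {lam : InvRatLam d} {dg : Set Circle1 → ℕ} (hdg : Unif lam dg) (C : Set Circle1) :
    CritElem d lam.rel C ↔ ((∃ x ∈ ratC, C = cls lam x) ∨ (∃ θ, θ ∉ ratC ∧ C = {z | Unl lam θ z})) ∧ ¬ Set.InjOn (md d) C := by
  have hunl : ∀ θ, ({θ' | UnlRel lam.rel θ θ'} : Set Circle1) = {z | Unl lam θ z} := by
    intro θ; ext z; exact unlRel_iff
  constructor
  · rintro (⟨⟨x, rfl⟩, hni⟩ | ⟨⟨θ, hθ, rfl⟩, hinf, hni⟩)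
    · refine ⟨?_, hni⟩
      by_cases hx : x ∈ ratC
      · exact Or.inl ⟨x, hx, realExt_cls hd hx⟩
      · right
        refine ⟨x, hx, ?_⟩
        by_cases hfin : {z | Unl lam x z}.Finite
        · ext z
          exact ⟨fun h => realExt_unl hd h hx, fun h => unl_fin_realExt hd hfin x z (Unl.refl hx) h⟩
        · refine absurd ?_ hni
          intro a ha b hb hab
          have hxa := realExt_unl hd ha hx
          refine realExt_inj hd hdg hxa.right (Relation.EqvGen.trans _ _ _ (Relation.EqvGen.symm _ _ ha) hb) ?_ hab
          intro hf
          exact hfin (hf.subset fun z hz => hxa.symm.trans hz)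
    · exact ⟨Or.inr ⟨θ, hθ, hunl θ⟩, hni⟩
  · rintro ⟨⟨x, hx, rfl⟩ | ⟨θ, hθ, rfl⟩, hni⟩
    · exact Or.inl ⟨⟨x, (realExt_cls hd hx).symm⟩, hni⟩
    · by_cases hfin : {z | Unl lam θ z}.Finite
      · refine Or.inl ⟨⟨θ, ?_⟩, hni⟩
        ext z
        exact ⟨fun h => unl_fin_realExt hd hfin θ z (Unl.refl hθ) h, fun h => realExt_unl hd h hθ⟩
      · exact Or.inr ⟨⟨θ, hθ, (hunl θ).symm⟩, hfin, hni⟩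

lemma sep_mid {A A' : Set Circle1} {x x' : Circle1} (hx : x ∉ A) (hx' : x' ∉ A) (h : ¬ Same A x x')
    (h' : Same A' x x') (hu : ∀ a ∈ A, ∀ b ∈ A, Same A' a b) : ∀ a ∈ A, Same A' x a := by
  obtain ⟨a, ha, b, hb, h1, h2⟩ := exists_sep hx hx' h
  intro a0 ha0
  refine Same.trans ?_ (hu a ha a0 ha0)
  by_contra hc
  obtain ⟨p, hp, q, hq, k1, k2⟩ := exists_sep h'.left (hu a ha a ha).left hc
  have k3 : cD x q ≤ cD x x' := by
    by_contra hlt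
    push Not at hlt
    exact not_same hp hq (k1.trans h1) hlt h'
  have e1 := cD_sub k2
  have e2 := cD_sub (h1.trans h2)
  refine not_same hq hp ?_ ?_ (hu a ha b hb)
  · linarith
  · have e3 := cD_cases x a p
    have e4 := cD_le x b
    have e5 := cD_pos x p; have e6 := cD_pos a p
    rcases e3 with e | e <;> linarith [e.1, e.2]

lemma irr_near {z : Circle1} {P : Circle1 → Prop} (h : ∀ᶠ y in nhds z, P y) (hz : z ∈ ratC) : ∃ y, y ∉ ratC ∧ P y := by
  obtain ⟨e, he, hy⟩ := nhds_cD' h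
  obtain ⟨r, hr, h1, h2⟩ := exists_irrational_btwn (show (0:ℝ) < min e 1 from lt_min he one_pos)
  refine ⟨z + (r : Circle1), ratC_add_irr hz hr, hy _ (Or.inl ?_)⟩
  rw [cD_add h1 (h2.le.trans (min_le_right _ _))]
  exact h2.trans_le (min_le_left _ _)

lemma eqv_nhds {F : Finset (Set Circle1)} (hF : GoodFam F) {x : Circle1} (hx : x ∉ PU F) :
    ∀ᶠ y in nhds x, Eqv F x y := by
  have : ∀ A ∈ (F : Set (Set Circle1)), ∀ᶠ y in nhds x, Same A x y := fun A hA =>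
    same_nhds (hF.fin A hA) (fun h => hx ⟨A, hA, h⟩)
  exact (Filter.eventually_all_finite F.finite_toSet).2 this

lemma local_step {d : ℕ} (hd : 2 ≤ d) {lam : InvRatLam d} {dg : Set Circle1 → ℕ} (hdg : Unif lam dg)
    {F F' : Finset (Set Circle1)} (hF : IsFam lam F) (hF' : IsFam lam F') (hs : F ⊆ F') {B : Set Circle1}
    (hB : ∀ A ∈ F', A ∈ F ∨ A = B) (hBF : B ∈ F')
    (hsum : ∑ A ∈ up lam F', ((dg A : ℤ) - 1) = ∑ A ∈ up lam F, ((dg A : ℤ) - 1))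
    {t y : Circle1} (ht : t ∉ ratC) (hy : y ∉ ratC) (hN : Nn d (Eqv (up lam F')) t = Nn d (Eqv (up lam F)) t)
    (h1 : Eqv F y t) (h2 : ¬ Eqv F' y t) : Nn d (Eqv (up lam F')) y = d := by
  classical
  have hBt : ¬ Same B y t := fun hc => h2 fun A hA => by
    rcases hB A hA with h | rfl
    · exact h1 A h
    · exact hc
  have hBnF : B ∉ F := fun hc => hBt (h1 B hc)
  have gF := hF.good
  have gF' := hF'.good
  have guF := (hF.up hd).good
  have guF' := (hF'.up hd).good
  obtain ⟨Y, hYs, hY⟩ := exists_transv gF (Y := {t}) (by simpa using ht) (by simp)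
  have htY : t ∈ Y := hYs (by simp)
  have hyY : y ∉ Y := fun hc => h2 (by rw [hY.sep y hc t htY h1]; exact Eqv.refl gF' ht)
  have tB : ∀ b ∈ B, Eqv F t b := fun b hb A hA =>
    sep_mid (gF'.nmem ht hBF) (gF'.nmem hy hBF) (fun h => hBt h.symm) (h1 A hA).symm
      (fun a ha b hb => gF'.unl B hBF A (hs hA) (fun e => hBnF (e ▸ hA)) a ha b hb) b hb
  have key : ∀ y' ∈ Y, Nn d (Eqv (up lam F')) y' = Nn d (Eqv (up lam F)) y' := by
    intro y' hy'
    by_cases hyt : y' = t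
    · rw [hyt, hN]
    have irr : ∀ x ∈ fib d y', x ∉ ratC := fun x hx => (irr_md hd).1 ((mem_fib hd).1 hx ▸ hY.irr y' hy')
    refine Nn_congr hd (eqI_eqv guF') (eqI_eqv guF) (hY.irr y' hy') fun x hx x' hx' => ?_
    refine ⟨fun h => h.mono (up_mono hd hF hF' hs), fun h A hA => ?_⟩
    by_cases hAF : A ∈ up lam F
    · exact h A hAF
    by_contra hc
    apply hyt
    refine hY.sep y' hy' t htY ?_
    obtain ⟨w, hw, rfl, hw'⟩ := (mem_up hd hF').1 hA
    have hwB : cls lam (md d w) = B := (hB _ hw').resolve_left (fun h => hAF ((mem_up hd hF).2 ⟨w, hw, rfl, h⟩))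
    have hmw : md d w ∈ B := hwB ▸ cls_self ((ratC_md hd).2 hw)
    have xw : Eqv (up lam F) x w := fun A' hA' =>
      sep_mid (irr_nmem (irr x hx)) (irr_nmem (irr x' hx')) hc (h A' hA')
        (fun a ha b hb => guF'.unl _ hA A' (up_mono hd hF hF' hs hA') (fun e => hAF (e ▸ hA')) a ha b hb) w (cls_self hw)
    have hwn : w ∉ PU (up lam F) := fun ⟨A', hA', hw2⟩ => (xw A' hA').right hw2
    have hmwn : md d w ∉ PU F := fun hc => hwn ((mem_PU_up hd hF).2 hc)
    obtain ⟨s, hs1, hs2, hs3⟩ := irr_near ((eqv_nhds guF hwn).and ((md_cont d).continuousAt.eventually (eqv_nhds gF hmwn))) hw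
    have e1 := eqv_md hd hdg hF (irr x hx) hs1 (xw.trans hs2)
    rw [(mem_fib hd).1 hx] at e1
    exact e1.trans (hs3.symm.trans (tB _ hmw).symm)
  have S1 := sum_ex hd hdg hF hY
  have S2 := sum_ex_le hd hdg hF' (Y := insert y Y) (by
      intro y' hy'
      rcases Finset.mem_insert.1 hy' with rfl | h
      · exact hy
      · exact hY.irr _ h) (by
      have k : ∀ y' ∈ Y, ¬ Eqv F' y y' := fun y' hy' he => by
        have := hY.sep t htY y' hy' (h1.symm.trans (he.mono hs))
        exact h2 (this ▸ he)
      intro a ha b hb he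
      rcases Finset.mem_insert.1 ha with ea | ha' <;> rcases Finset.mem_insert.1 hb with eb | hb'
      · rw [ea, eb]
      · exact absurd (ea ▸ he) (k b hb')
      · exact absurd (eb ▸ he.symm) (k a ha')
      · exact hY.sep a ha' b hb' (he.mono hs))
  rw [Finset.sum_insert hyY, Finset.sum_congr rfl (fun y' hy' => by rw [key y' hy']), S1, hsum] at S2
  have := Nn_le hd (Eqv (up lam F')) y
  have : (d:ℤ) ≤ Nn d (Eqv (up lam F')) y := by linarith
  omega

lemma local_claim {d : ℕ} (hd : 2 ≤ d) {lam : InvRatLam d} {dg : Set Circle1 → ℕ} (hdg : Unif lam dg)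
    {F0 : Finset (Set Circle1)} (hF0 : IsFam lam F0)
    (hsum : ∀ F, IsFam lam F → F0 ⊆ F → ∑ A ∈ up lam F, ((dg A : ℤ) - 1) = ∑ A ∈ up lam F0, ((dg A : ℤ) - 1))
    {t y : Circle1} (ht : t ∉ ratC) (hy : y ∉ ratC)
    (hN : ∀ F, IsFam lam F → F0 ⊆ F → Nn d (Eqv (up lam F)) t = Nn d (Eqv (up lam F0)) t)
    (h1 : Eqv F0 y t) {F : Finset (Set Circle1)} (hF : IsFam lam F) (hs : F0 ⊆ F) (h2 : ¬ Eqv F y t) :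
    Nn d (Eqv (up lam F)) y = d := by
  classical
  have main : ∀ G : Finset (Set Circle1), IsFam lam G → ¬ Eqv (F0 ∪ G) y t → Nn d (Eqv (up lam (F0 ∪ G))) y = d := by
    intro G
    induction G using Finset.induction_on with
    | empty => intro _ h; simp at h; exact absurd h1 h
    | insert B G hBG ih =>
      intro hG h
      have hG' : IsFam lam G := fun A hA => hG A (Finset.mem_insert_of_mem hA)
      have f1 := hF0.union hG'
      have f2 := hF0.union hG
      have hss : F0 ∪ G ⊆ F0 ∪ insert B G := Finset.union_subset_union_right (Finset.subset_insert _ _)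
      by_cases hc : Eqv (F0 ∪ G) y t
      · refine local_step hd hdg f1 f2 hss (B := B) ?_ (by simp) ?_ ht hy ?_ hc h
        · intro A hA
          simp only [Finset.mem_union, Finset.mem_insert] at hA ⊢
          tauto
        · rw [hsum _ f1 Finset.subset_union_left, hsum _ f2 Finset.subset_union_left]
        · rw [hN _ f1 Finset.subset_union_left, hN _ f2 Finset.subset_union_left]
      · refine le_antisymm (Nn_le hd _ _) ?_
        exact (ih hG' hc).ge.trans (Nn_mono hd (eqI_eqv (f1.up hd).good) (eqI_eqv (f2.up hd).good)
          (fun a b hab => hab.mono (up_mono hd f1 f2 hss)) hy)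
  have := main F hF
  rw [Finset.union_eq_right.2 hs] at this
  exact this h2

lemma fset_lb {α : Type*} (S : Finset α) (f : α → ℝ) (hf : ∀ p ∈ S, 0 < f p) :
    ∃ e > 0, ∀ p ∈ S, e ≤ f p := by
  classical
  induction S using Finset.induction_on with
  | empty => exact ⟨1, one_pos, by simp⟩
  | insert a S ha ih =>
    obtain ⟨e, he, h⟩ := ih (fun p hp => hf p (Finset.mem_insert_of_mem hp))
    refine ⟨min e (f a), lt_min he (hf a (Finset.mem_insert_self _ _)), fun p hp => ?_⟩
    rcases Finset.mem_insert.1 hp with rfl | hp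
    · exact min_le_right _ _
    · exact (min_le_left _ _).trans (h p hp)

/-- right germs at `x`, `x'` are not separated by any class -/
def Grm {d : ℕ} (lam : InvRatLam d) (x x' : Circle1) : Prop :=
  ∀ w ∈ ratC, ∀ e : ℝ, 0 < e → ∃ s s', s ∉ ratC ∧ s' ∉ ratC ∧ cD x s < e ∧ cD x' s' < e ∧ Same (cls lam w) s s'

lemma same_germ {A : Set Circle1} {x s s' : Circle1} (hs : s ∉ A) (hs' : s' ∉ A)
    (h1 : ∀ p ∈ A, cD x s < cD x p) (h2 : ∀ p ∈ A, cD x s' < cD x p) : Same A s s' := by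
  have key : ∀ s s', s ∉ A → s' ∉ A → (∀ p ∈ A, cD x s < cD x p) → (∀ p ∈ A, cD x s' < cD x p) →
      cD x s < cD x s' → Same A s s' := by
    intro s s' hs hs' h1 h2 hlt
    refine same_of_arc hs hs' fun t ht hc => ?_
    have := cD_sub hlt
    have := cD_sub (h1 t ht)
    have := h2 t ht
    linarith
  rcases lt_trichotomy (cD x s) (cD x s') with h | h | h
  · exact key s s' hs hs' h1 h2 h
  · rw [← cD_inj h]; exact Same.refl hs
  · exact (key s' s hs' hs h2 h1 h).symm

lemma exists_irr_arc {x : Circle1} (hx : x ∈ ratC) {e : ℝ} (he : 0 < e) : ∃ s, s ∉ ratC ∧ cD x s < e := by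
  obtain ⟨r, hr, h1, h2⟩ := exists_irrational_btwn (show (0:ℝ) < min e 1 from lt_min he one_pos)
  refine ⟨x + (r : Circle1), ratC_add_irr hx hr, ?_⟩
  rw [cD_add h1 (h2.le.trans (min_le_right _ _))]
  exact h2.trans_le (min_le_left _ _)

/-- all germ points for a finite family -/
lemma Grm.eqv {d : ℕ} {lam : InvRatLam d} {x x' : Circle1} (h : Grm lam x x') {F : Finset (Set Circle1)} (hF : IsFam lam F) :
    ∃ e > 0, ∀ s s', s ∉ ratC → s' ∉ ratC → cD x s < e → cD x' s' < e → Eqv F s s' := by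
  obtain ⟨e1, he1, h1⟩ := fin_lb hF.good.finPU (cD x) (fun p _ => cD_pos _ _)
  obtain ⟨e2, he2, h2⟩ := fin_lb hF.good.finPU (cD x') (fun p _ => cD_pos _ _)
  refine ⟨min e1 e2, lt_min he1 he2, fun s s' hs hs' a1 a2 A hA => ?_⟩
  obtain ⟨w, hw, rfl⟩ := hF A hA
  obtain ⟨t, t', i1, i2, b1, b2, b3⟩ := h w hw _ (lt_min he1 he2)
  have c1 : ∀ u, cD x u < min e1 e2 → ∀ p ∈ cls lam w, cD x u < cD x p := fun u hu p hp =>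
    (hu.trans_le (min_le_left _ _)).trans (h1 p ⟨_, hA, hp⟩)
  have c2 : ∀ u, cD x' u < min e1 e2 → ∀ p ∈ cls lam w, cD x' u < cD x' p := fun u hu p hp =>
    (hu.trans_le (min_le_right _ _)).trans (h2 p ⟨_, hA, hp⟩)
  exact (same_germ (irr_nmem hs) (irr_nmem i1) (c1 _ a1) (c1 _ b1)).trans
    (b3.trans (same_germ (irr_nmem i2) (irr_nmem hs') (c2 _ b2) (c2 _ a2)))

/-- fiber pair stabilisation -/
lemma unl_pair {d : ℕ} (hd : 2 ≤ d) {lam : InvRatLam d} {F0 : Finset (Set Circle1)} (hF0 : IsFam lam F0) {z : Circle1} (hz : z ∉ ratC)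
    (h : ∀ F, IsFam lam F → F0 ⊆ F → Nn d (Eqv (up lam F)) z ≠ d) :
    ∃ x x', md d x = z ∧ md d x' = z ∧ x ≠ x' ∧ Unl lam x x' := by
  classical
  obtain ⟨F1, hF1, hs⟩ := exists_stab hd lam (fib d z)
  have f := hF0.union hF1
  have hlt := lt_of_le_of_ne (Nn_le hd _ _) (h _ f Finset.subset_union_left)
  obtain ⟨x, x', h1, h2, h3, h4⟩ := (Nn_lt hd (eqI_eqv (f.up hd).good) hz).1 hlt
  exact ⟨x, x', h1, h2, h3, (hs x ((mem_fib hd).2 h1) x' ((mem_fib hd).2 h2)).2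
    (h4.mono (up_mono hd hF1 f Finset.subset_union_right))⟩

lemma germ_crit {d : ℕ} (hd : 2 ≤ d) {lam : InvRatLam d} {dg : Set Circle1 → ℕ} (hdg : Unif lam dg)
    {T : Finset Circle1} (hT : ∀ x x', md d x = md d x' → x ≠ x' → Unl lam x x' → ∃ t ∈ T, Unl lam (md d x) t)
    {F0 : Finset (Set Circle1)} (hF0 : IsFam lam F0) {x x' z : Circle1} (hz : z ∈ ratC) (hx : md d x = z) (hx' : md d x' = z)
    (hne : x ≠ x') (hG : Grm lam x x') : ∃ t ∈ T, ∃ e > 0, ∀ y, y ∉ ratC → cD z y < e → Eqv F0 y t := by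
  have hd' : (2:ℝ) ≤ d := by exact_mod_cast hd
  have xr : x ∈ ratC := (ratC_md hd).1 (hx ▸ hz)
  have xr' : x' ∈ ratC := (ratC_md hd).1 (hx' ▸ hz)
  obtain ⟨w, hw, hmin⟩ := Set.exists_min_image (cls lam x) (cD x) (cls_fin lam x) ⟨x, cls_self xr⟩
  have hxw : cD x x' < cD x w := by
    by_contra hc
    push Not at hc
    have h1 := cD_lt_one hne
    obtain ⟨s, s', i1, i2, a1, a2, a3⟩ := hG x xr (min (cD x w) (1 - cD x x')) (lt_min (cD_pos _ _) (by linarith))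
    have b1 := arc_same (cls_self xr) hw (a1.trans_le (min_le_left _ _)) a3
    have b2 := a2.trans_le (min_le_right _ _)
    have := cD_pos x' s'
    rcases cD_cases x x' s' with e | e <;> linarith [e.1, e.2]
  by_cases hH : ∀ t, t ∉ ratC → cD x t < cD x w → ∃ p q, lam.rel p q ∧ cD x p < cD x t ∧ cD x t < cD x q ∧ cD x q < cD x w
  · exfalso
    obtain ⟨p, q, hr, h1, h2, h3⟩ := gap hd hH (fun _ p hp => not_lt.2 (hmin p hp))
      (fun _ p hp => not_lt.2 (hmin p (lam.trans _ _ _ hw hp))) (cD_pos x x') hxw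
    obtain ⟨s, s', i1, i2, a1, a2, a3⟩ := hG p (lam.rel_rat _ _ hr).1 (min (cD x p) (cD x q - cD x x'))
      (lt_min (cD_pos _ _) (by linarith))
    have b1 := a1.trans_le (min_le_left _ _)
    have b2 := a2.trans_le (min_le_right _ _)
    have c1 := cD_sub b1
    have c2 := cD_sub (b1.trans (h1.trans h2))
    have c3 := cD_pos x' s'
    have c4 := cD_le x q
    have c5 : cD x s' = cD x x' + cD x' s' := by
      rcases cD_cases x x' s' with e | e <;> linarith [e.1, e.2]
    have c6 : cD s s' = cD x s' - cD x s := cD_sub (by linarith)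
    exact not_same (cls_self (lam.rel_rat _ _ hr).1) hr (by linarith) (by linarith) a3
  · push Not at hH
    obtain ⟨t, ti, htw, hH⟩ := hH
    have hst : ∀ F, IsFam lam F → ∃ e > 0, ∀ s, s ∉ ratC → cD x s < e → Eqv F s t := by
      intro F hF
      obtain ⟨e1, he1, h1⟩ := fin_lb hF.good.finPU (cD x) (fun p _ => cD_pos _ _)
      refine ⟨min e1 (cD x t), lt_min he1 (cD_pos _ _), fun s si hs D hD => ?_⟩
      obtain ⟨v, hv, rfl⟩ := hF D hD
      have a1 := hs.trans_le (min_le_left _ _)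
      have a2 := cD_sub (hs.trans_le (min_le_right _ _))
      by_contra hc
      obtain ⟨p, hp, q, hq, k1, k2⟩ := exists_sep (irr_nmem si) (irr_nmem ti) hc
      have b1 := cD_sub (a1.trans (h1 p ⟨_, hD, hp⟩))
      have b2 := cD_sub (a1.trans (h1 q ⟨_, hD, hq⟩))
      have hpq : lam.rel p q := lam.trans _ _ _ (lam.symm _ _ hp) hq
      have hqw := hH p q hpq (by linarith) (by linarith)
      have hxp : ¬ lam.rel x p := fun hc => by
        have := hmin p hc
        linarith
      have := arc_same (cls_self xr) hw (show cD x p < cD x w by linarith) (rel_same hxp hpq)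
      linarith
    have tmi : md d t ∉ ratC := (irr_md hd).2 ti
    obtain ⟨x1, x2, m1, m2, m3, m4⟩ := unl_pair hd hF0 tmi (fun F hF _ => by
      obtain ⟨e1, he1, h1⟩ := hst _ (hF.up hd)
      obtain ⟨e2, he2, h2⟩ := hG.eqv (hF.up hd)
      obtain ⟨y, yi, hy⟩ := exists_irr_arc hz (lt_min (lt_min he1 he2) one_pos)
      have hle : cD z y / d ≤ cD z y := div_le_self (cD_pos _ _).le (by linarith)
      have s1 : cD x (lft d x y) = cD z y / d := by rw [cD_lft hd, hx]
      have s2 : cD x' (lft d x' y) = cD z y / d := by rw [cD_lft hd, hx']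
      have n1 : lft d x y ∉ ratC := (irr_md hd).1 (by rw [md_lft hd]; exact yi)
      have n2 : lft d x' y ∉ ratC := (irr_md hd).1 (by rw [md_lft hd]; exact yi)
      have hyy := hy.trans_le (min_le_left _ _)
      have l1 := hyy.trans_le (min_le_left _ _)
      have l2 := hyy.trans_le (min_le_right _ _)
      have q1 := h1 _ n1 (by linarith)
      have q2 := h2 _ _ n1 n2 (by linarith) (by linarith)
      have q3 := eqv_md hd hdg hF n1 ti q1
      rw [md_lft hd] at q3
      rw [← Nn_eqv hd hdg hF yi tmi q3]
      refine ((Nn_lt hd (eqI_eqv (hF.up hd).good) yi).2 ⟨_, _, md_lft hd x y, md_lft hd x' y, fun hc => hne ?_, q2⟩).ne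
      have r1 := cD_coe x (lft d x y)
      have r2 := cD_coe x' (lft d x' y)
      rw [s1] at r1; rw [s2, ← hc, ← r1] at r2
      exact (add_right_cancel r2).symm)
    obtain ⟨t0, ht0, hu⟩ := hT x1 x2 (m1.trans m2.symm) m3 m4
    rw [m1] at hu
    obtain ⟨e1, he1, h1⟩ := hst _ (hF0.up hd)
    refine ⟨t0, ht0, e1, he1, fun y yi hy => ?_⟩
    have hle : cD z y / d ≤ cD z y := div_le_self (cD_pos _ _).le (by linarith)
    have s1 : cD x (lft d x y) = cD z y / d := by rw [cD_lft hd, hx]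
    have n1 : lft d x y ∉ ratC := (irr_md hd).1 (by rw [md_lft hd]; exact yi)
    have q3 := eqv_md hd hdg hF0 n1 ti (h1 _ n1 (by linarith))
    rw [md_lft hd] at q3
    exact q3.trans (hu.eqv hF0)

def Pr (d : ℕ) (lam : InvRatLam d) (T : Finset Circle1) (F0 : Finset (Set Circle1)) (s : Set Circle1) : Prop :=
  ∃ F, IsFam lam F ∧ F0 ⊆ F ∧ ∀ y ∈ s, y ∉ ratC → Nn d (Eqv (up lam F)) y = d ∨ ∃ t ∈ T, Eqv F0 y t

lemma Nn_up {d : ℕ} (hd : 2 ≤ d) {lam : InvRatLam d} {F F' : Finset (Set Circle1)} (hF : IsFam lam F) (hF' : IsFam lam F')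
    (hs : F ⊆ F') {y : Circle1} (hy : y ∉ ratC) (h : Nn d (Eqv (up lam F)) y = d) : Nn d (Eqv (up lam F')) y = d :=
  le_antisymm (Nn_le hd _ _) (h.ge.trans (Nn_mono hd (eqI_eqv (hF.up hd).good) (eqI_eqv (hF'.up hd).good)
          (fun a b hab => hab.mono (up_mono hd hF hF' hs)) hy))

lemma Pr.union {d : ℕ} (hd : 2 ≤ d) {lam : InvRatLam d} {T : Finset Circle1} {F0 : Finset (Set Circle1)} {s s' : Set Circle1}
    (h : Pr d lam T F0 s) (h' : Pr d lam T F0 s') : Pr d lam T F0 (s ∪ s') := by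
  classical
  obtain ⟨F, hF, h1, h2⟩ := h
  obtain ⟨F', hF', h1', h2'⟩ := h'
  refine ⟨F ∪ F', hF.union hF', h1.trans Finset.subset_union_left, fun y hy yi => ?_⟩
  rcases hy with hy | hy
  · exact (h2 y hy yi).imp_left (Nn_up hd hF (hF.union hF') Finset.subset_union_left yi)
  · exact (h2' y hy yi).imp_left (Nn_up hd hF' (hF.union hF') Finset.subset_union_right yi)

lemma Pr.mono {d : ℕ} {lam : InvRatLam d} {T : Finset Circle1} {F0 : Finset (Set Circle1)} {s s' : Set Circle1}
    (hs : s ⊆ s') (h : Pr d lam T F0 s') : Pr d lam T F0 s := by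
  obtain ⟨F, hF, h1, h2⟩ := h
  exact ⟨F, hF, h1, fun y hy yi => h2 y (hs hy) yi⟩

lemma pr_right {d : ℕ} (hd : 2 ≤ d) {lam : InvRatLam d} {dg : Set Circle1 → ℕ} (hdg : Unif lam dg)
    {T : Finset Circle1} (hT : ∀ x x', md d x = md d x' → x ≠ x' → Unl lam x x' → ∃ t ∈ T, Unl lam (md d x) t)
    {F0 : Finset (Set Circle1)} (hF0 : IsFam lam F0) {z : Circle1} (hz : z ∈ ratC) :
    ∃ e > 0, Pr d lam T F0 {y | cD z y < e} := by
  classical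
  have hd' : (2:ℝ) ≤ d := by exact_mod_cast hd
  by_cases hg : ∃ x x', md d x = z ∧ md d x' = z ∧ x ≠ x' ∧ Grm lam x x'
  · obtain ⟨x, x', h1, h2, h3, h4⟩ := hg
    obtain ⟨t, ht, e, he, h⟩ := germ_crit hd hdg hT hF0 hz h1 h2 h3 h4
    exact ⟨e, he, F0, hF0, subset_rfl, fun y hy yi => Or.inr ⟨t, ht, h y yi hy⟩⟩
  · have hg' : ∀ p : Circle1 × Circle1, ∃ (w : Circle1) (e : ℝ), w ∈ ratC ∧ 0 < e ∧ (md d p.1 = z → md d p.2 = z → p.1 ≠ p.2 →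
        ∀ s s', s ∉ ratC → s' ∉ ratC → cD p.1 s < e → cD p.2 s' < e → ¬ Same (cls lam w) s s') := by
      intro p
      by_cases hp : md d p.1 = z ∧ md d p.2 = z ∧ p.1 ≠ p.2
      · have : ¬ Grm lam p.1 p.2 := fun hc => hg ⟨p.1, p.2, hp.1, hp.2.1, hp.2.2, hc⟩
        unfold Grm at this
        push Not at this
        obtain ⟨w, hw, e, he, h⟩ := this
        exact ⟨w, e, hw, he, fun _ _ _ => h⟩
      · exact ⟨z, 1, hz, one_pos, fun a b c => absurd ⟨a, b, c⟩ hp⟩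
    choose w e hw he h using hg'
    obtain ⟨ε, hε, hle⟩ := fset_lb (fib d z ×ˢ fib d z) e (fun p _ => he p)
    have hF1 : IsFam lam ((fib d z ×ˢ fib d z).image (fun p => cls lam (md d (w p)))) := fun A hA => by
      obtain ⟨p, -, rfl⟩ := Finset.mem_image.1 hA
      exact ⟨_, (ratC_md hd).2 (hw p), rfl⟩
    have hF := hF0.union hF1
    refine ⟨ε, hε, _, hF, Finset.subset_union_left, fun y hy yi => Or.inl ?_⟩
    by_contra hc
    obtain ⟨s, s', m1, m2, m3, m4⟩ := (Nn_lt hd (eqI_eqv (hF.up hd).good) yi).1 (lt_of_le_of_ne (Nn_le hd _ _) hc)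
    have c1 := cD_rft hd s z
    have c2 := cD_rft hd s' z
    rw [m1] at c1
    rw [m2] at c2
    have hne : rft d s z ≠ rft d s' z := fun hc => m3 (by rw [← cD_coe (rft d s z) s, ← cD_coe (rft d s' z) s', c1, c2, hc])
    have hp : (rft d s z, rft d s' z) ∈ fib d z ×ˢ fib d z :=
      Finset.mem_product.2 ⟨(mem_fib hd).2 (md_rft hd _ _), (mem_fib hd).2 (md_rft hd _ _)⟩
    have hyε : cD z y < ε := hy
    have hle' : cD z y / d ≤ cD z y := div_le_self (cD_pos _ _).le (by linarith)
    have hl := hle _ hp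
    refine h (rft d s z, rft d s' z) (md_rft hd _ _) (md_rft hd _ _) hne s s' ((irr_md hd).1 (m1 ▸ yi)) ((irr_md hd).1 (m2 ▸ yi))
      (by simp only [c1]; linarith) (by simp only [c2]; linarith) ?_
    exact m4 _ ((mem_up hd hF).2 ⟨_, hw _, rfl, Finset.mem_union_right _ (Finset.mem_image_of_mem (fun p => cls lam (md d (w p))) hp)⟩)

lemma pr_left {d : ℕ} (hd : 2 ≤ d) {lam : InvRatLam d} {dg : Set Circle1 → ℕ} (hdg : Unif lam dg)
    {T : Finset Circle1} (hT : ∀ x x', md d x = md d x' → x ≠ x' → Unl lam x x' → ∃ t ∈ T, Unl lam (md d x) t)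
    {F0 : Finset (Set Circle1)} (hF0 : IsFam lam F0) {z : Circle1} (hz : z ∈ ratC) :
    ∃ e > 0, Pr d lam T F0 {y | cD y z < e} := by
  classical
  obtain ⟨u, hu, hmin⟩ := exists_pred (cls_fin lam z) (cls_self hz)
  obtain ⟨e, he, F, hF, hs, h⟩ := pr_right hd hdg hT hF0 (cls_rat hu)
  have hF' := hF.union (isFam_single hz)
  obtain ⟨e1, he1, h1⟩ := fin_lb hF'.good.finPU (cD u) (fun p _ => cD_pos _ _)
  obtain ⟨e2, he2, h2⟩ := fin_lb hF'.good.finPU (fun p => cD p z) (fun p _ => cD_pos _ _)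
  obtain ⟨s, si, hsm⟩ := exists_irr_arc (cls_rat hu) (lt_min he he1)
  refine ⟨e2, he2, _, hF', hs.trans Finset.subset_union_left, fun y hy yi => ?_⟩
  have q := eqv_adj hF'.good (A := cls lam z) (Finset.mem_union_right _ (Finset.mem_singleton_self _)) hu (cls_self hz) hmin si yi
    (fun p hp => (hsm.trans_le (min_le_right _ _)).trans (h1 p hp)) (fun p hp => lt_trans hy (h2 p hp))
  rcases h s (hsm.trans_le (min_le_left _ _)) si with k | ⟨t, ht, k⟩
  · left
    rw [Nn_eqv hd hdg hF' yi si q]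
    exact Nn_up hd hF hF' Finset.subset_union_left si k
  · exact Or.inr ⟨t, ht, (q.mono (hs.trans Finset.subset_union_left)).trans k⟩

lemma pr_univ {d : ℕ} (hd : 2 ≤ d) {lam : InvRatLam d} {dg : Set Circle1 → ℕ} (hdg : Unif lam dg)
    {T : Finset Circle1} (hT : ∀ x x', md d x = md d x' → x ≠ x' → Unl lam x x' → ∃ t ∈ T, Unl lam (md d x) t)
    {F0 : Finset (Set Circle1)} (hF0 : IsFam lam F0) : Pr d lam T F0 Set.univ := by
  refine (isCompact_univ (X := Circle1)).induction_on (p := Pr d lam T F0) ⟨F0, hF0, subset_rfl, by simp⟩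
    (fun s t hst h => h.mono hst) (fun s t h h' => h.union hd h') fun z _ => ?_
  simp only [nhdsWithin_univ]
  by_cases hz : z ∈ ratC
  · obtain ⟨e1, he1, h1⟩ := pr_right hd hdg hT hF0 hz
    obtain ⟨e2, he2, h2⟩ := pr_left hd hdg hT hF0 hz
    refine ⟨_, nhds_cD z (lt_min he1 he2), ?_⟩
    obtain ⟨F, hF, hs, h⟩ := h1.union hd h2
    refine ⟨F, hF, hs, fun y hy yi => ?_⟩
    rcases hy with rfl | hy | hy
    · exact absurd hz yi
    · exact h y (Or.inl (lt_of_lt_of_le hy (min_le_left _ _))) yi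
    · exact h y (Or.inr (lt_of_lt_of_le hy (min_le_right _ _))) yi
  · by_cases hc : ∃ F, IsFam lam F ∧ F0 ⊆ F ∧ Nn d (Eqv (up lam F)) z = d
    · obtain ⟨F, hF, hs, h⟩ := hc
      refine ⟨_, eqv_nhds hF.good (fun h => hz (hF.good.ratPU h)), F, hF, hs, fun y hy yi => Or.inl ?_⟩
      rw [← Nn_eqv hd hdg hF hz yi hy, h]
    · obtain ⟨x, x', m1, m2, m3, m4⟩ := unl_pair hd hF0 hz (fun F hF hs he => hc ⟨F, hF, hs, he⟩)
      obtain ⟨t, ht, hu⟩ := hT x x' (m1.trans m2.symm) m3 m4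
      rw [m1] at hu
      exact ⟨_, eqv_nhds hF0.good (fun h => hz (hF0.good.ratPU h)), F0, hF0, subset_rfl, fun y hy yi =>
        Or.inr ⟨t, ht, Eqv.trans (Eqv.symm hy) (hu.eqv hF0)⟩⟩

lemma main_sum {d : ℕ} (hd : 2 ≤ d) {lam : InvRatLam d} {dg : Set Circle1 → ℕ} (hdg : Unif lam dg)
    {T : Finset Circle1} (hT : ∀ x x', md d x = md d x' → x ≠ x' → Unl lam x x' → ∃ t ∈ T, Unl lam (md d x) t)
    (hTi : ∀ t ∈ T, t ∉ ratC) (hTs : ∀ t ∈ T, ∀ t' ∈ T, Unl lam t t' → t = t')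
    {R : Finset (Set Circle1)} (hR : ∀ A ∈ R, ∃ x ∈ ratC, A = cls lam x) (hR1 : ∀ x ∈ ratC, cls lam x ∉ R → dg (cls lam x) = 1) :
    ∑ t ∈ T, ((d : ℤ) - Nn d (Unl lam) t) = d - 1 - ∑ A ∈ R, ((dg A : ℤ) - 1) := by
  classical
  obtain ⟨F1, hF1, hst⟩ := exists_stab hd lam (T ∪ T.biUnion (fib d))
  have hF2 : IsFam lam (R.image (fun A => md d '' A)) := fun B hB => by
    obtain ⟨A, hA, rfl⟩ := Finset.mem_image.1 hB
    obtain ⟨x, hx, rfl⟩ := hR A hA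
    exact ⟨_, (ratC_md hd).2 hx, md_cls hx⟩
  have hF0 := hF1.union hF2
  set F0 := F1 ∪ R.image (fun A => md d '' A) with hF0d
  have hsum : ∀ F, IsFam lam F → F0 ⊆ F → ∑ A ∈ up lam F, ((dg A : ℤ) - 1) = ∑ A ∈ R, ((dg A : ℤ) - 1) := by
    intro F hF hs
    symm
    refine Finset.sum_subset (fun A hA => ?_) (fun A hA' hA => by
      obtain ⟨x, hx, rfl⟩ := hF.up hd A hA'
      rw [hR1 x hx hA]; simp)
    obtain ⟨x, hx, rfl⟩ := hR A hA
    refine (mem_up hd hF).2 ⟨x, hx, rfl, hs (Finset.mem_union_right _ ?_)⟩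
    rw [← md_cls hx]
    exact Finset.mem_image_of_mem _ hA
  have hN : ∀ t ∈ T, ∀ F, IsFam lam F → F0 ⊆ F → Nn d (Eqv (up lam F)) t = Nn d (Unl lam) t := by
    intro t ht F hF hs
    refine Nn_congr hd (eqI_eqv (hF.up hd).good) (eqI_unl lam) (hTi t ht) fun x hx x' hx' => ⟨fun h => ?_, fun h => h.eqv (hF.up hd)⟩
    have hm : ∀ x ∈ fib d t, x ∈ T ∪ T.biUnion (fib d) := fun x hx =>
      Finset.mem_union_right _ (Finset.mem_biUnion.2 ⟨t, ht, hx⟩)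
    exact (hst x (hm x hx) x' (hm x' hx')).2 (h.mono (up_mono hd hF1 hF (Finset.subset_union_left.trans hs)))
  have hTF : ∀ F, F0 ⊆ F → ∀ t ∈ T, ∀ t' ∈ T, Eqv F t t' → t = t' := fun F hs t ht t' ht' h =>
    hTs t ht t' ht' ((hst t (Finset.mem_union_left _ ht) t' (Finset.mem_union_left _ ht')).1
      (h.mono (Finset.subset_union_left.trans hs)))
  obtain ⟨F, hF, hs, h⟩ := pr_univ hd hdg hT hF0
  obtain ⟨Y, hTY, hY⟩ := exists_transv hF.good hTi (hTF F hs)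
  have S1 := sum_ex hd hdg hF hY
  rw [hsum F hF hs] at S1
  rw [← S1, Finset.sum_congr rfl (fun t ht => by rw [← hN t ht F hF hs])]
  refine Finset.sum_subset hTY fun y hy hyT => ?_
  have yi := hY.irr y hy
  have : Nn d (Eqv (up lam F)) y = d := by
    rcases h y trivial yi with k | ⟨t, ht, k⟩
    · exact k
    · refine local_claim hd hdg hF0 (fun G hG hGs => by rw [hsum G hG hGs, hsum F0 hF0 subset_rfl]) (hTi t ht) yi
        (fun G hG hGs => by rw [hN t ht G hG hGs, hN t ht F0 hF0 subset_rfl]) k hF hs fun hc => hyT ?_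
      rw [hY.sep y hy t (hTY ht) hc]; exact ht
  linarith

def rp {d : ℕ} (lam : InvRatLam d) (x : Circle1) : Circle1 :=
  haveI : Nonempty Circle1 := ⟨0⟩
  Classical.epsilon (fun z => Unl lam x z)

lemma rp_spec {d : ℕ} {lam : InvRatLam d} {x : Circle1} (hx : x ∉ ratC) : Unl lam x (rp lam x) :=
  Classical.epsilon_spec (p := fun z => Unl lam x z) ⟨x, Unl.refl hx⟩

lemma rp_eq {d : ℕ} {lam : InvRatLam d} {x y : Circle1} (h : Unl lam x y) : rp lam x = rp lam y := by
  have : (fun z => Unl lam x z) = (fun z => Unl lam y z) := by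
    funext z
    exact propext ⟨fun k => h.symm.trans k, fun k => h.trans k⟩
  unfold rp
  rw [this]

def thl (L : Set Circle1) : Circle1 :=
  haveI : Nonempty Circle1 := ⟨0⟩
  Classical.epsilon (fun z => z ∈ L)

lemma thl_spec {L : Set Circle1} (h : L.Nonempty) : thl L ∈ L :=
  Classical.epsilon_spec (p := fun z => z ∈ L) h

lemma ne_of_not_inj {d : ℕ} {C : Set Circle1} (h : ¬ Set.InjOn (md d) C) : C.Nonempty := by
  by_contra hc
  rw [Set.not_nonempty_iff_eq_empty] at hc
  subst hc
  exact h (Set.injOn_empty _)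

lemma deg_pos {d : ℕ} (hd : 2 ≤ d) {C : Set Circle1} {n : ℕ} (h : classDeg d C n) (hC : C.Nonempty) : 1 ≤ n := by
  obtain ⟨x, hx⟩ := hC
  rw [← h (md d x) ⟨x, hx, rfl⟩]
  refine (Set.ncard_pos ?_).2 ⟨x, hx, rfl⟩
  exact (fib d (md d x)).finite_toSet.subset fun y hy => (mem_fib hd).2 hy.2

lemma crit_not_inj {d : ℕ} {r : Circle1 → Circle1 → Prop} {C : Set Circle1} (h : CritElem d r C) : ¬ Set.InjOn (md d) C := by
  rcases h with h | h
  · exact h.2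
  · exact h.2.2

lemma main_thm {d : ℕ} (hd : 2 ≤ d) (lam : InvRatLam d)
    (S : Finset (Set Circle1)) (hS : ∀ C : Set Circle1, C ∈ S ↔ CritElem d lam.rel C)
    (δf : Set Circle1 → ℕ) (hδ : ∀ C ∈ S, classDeg d C (δf C)) :
    d = 1 + ∑ C ∈ S, (δf C - 1) := by
  classical
  have hpos : ∀ C ∈ S, 1 ≤ δf C := fun C hC => deg_pos hd (hδ C hC) (ne_of_not_inj (crit_not_inj ((hS C).1 hC)))
  have hdg : Unif lam (fun C => if C ∈ S then δf C else 1) := by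
    intro x hx
    by_cases hA : cls lam x ∈ S
    · simp only [hA, if_true]
      exact ⟨hpos _ hA, hδ _ hA⟩
    · simp only [hA, if_false]
      refine ⟨le_rfl, ?_⟩
      have hinj : Set.InjOn (md d) (cls lam x) := by
        by_contra hc
        exact hA ((hS _).2 (Or.inl ⟨⟨x, (realExt_cls hd hx).symm⟩, hc⟩))
      rintro y ⟨a, ha, rfl⟩
      rw [Set.ncard_eq_one]
      refine ⟨a, Set.ext fun b => ⟨fun hb => hinj hb.1 ha hb.2, ?_⟩⟩
      rintro rfl
      exact ⟨ha, rfl⟩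
  set dg : Set Circle1 → ℕ := fun C => if C ∈ S then δf C else 1 with hdgd
  have hcr := critElem_iff hd hdg
  set Sr := S.filter (fun C => ∃ x ∈ ratC, C = cls lam x) with hSr
  set Su := S.filter (fun C => ¬ ∃ x ∈ ratC, C = cls lam x) with hSu
  have su : ∀ L, L ∈ Su ↔ L ∈ S ∧ ∃ θ, θ ∉ ratC ∧ L = {z | Unl lam θ z} := by
    intro L
    rw [hSu, Finset.mem_filter]
    refine and_congr_right fun hL => ⟨fun h => ((hcr L).1 ((hS L).1 hL)).1.resolve_left h, ?_⟩
    rintro ⟨θ, hθ, rfl⟩ ⟨x, hx, e⟩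
    have : x ∈ {z | Unl lam θ z} := e ▸ cls_self hx
    exact Unl.right this hx
  have suth : ∀ L ∈ Su, thl L ∉ ratC ∧ L = {z | Unl lam (thl L) z} := by
    intro L hL
    obtain ⟨-, θ, hθ, e⟩ := (su L).1 hL
    have h1 : thl L ∈ L := thl_spec ⟨θ, by rw [e]; exact Unl.refl hθ⟩
    have h2 : Unl lam θ (thl L) := by
      have h3 : thl L ∈ {z | Unl lam θ z} := by rw [← e]; exact h1
      exact h3
    refine ⟨h2.right, ?_⟩
    conv_lhs => rw [e]
    exact ((eqI_unl lam).cls_eq h2.right).2 h2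
  set T := Su.image (fun L => rp lam (md d (thl L))) with hTd
  have tmem : ∀ t ∈ T, ∃ a, a ∉ ratC ∧ t = rp lam a := by
    intro t ht
    obtain ⟨L, hL, rfl⟩ := Finset.mem_image.1 ht
    exact ⟨_, (irr_md hd).2 (suth L hL).1, rfl⟩
  have hTi : ∀ t ∈ T, t ∉ ratC := by
    intro t ht
    obtain ⟨a, ha, rfl⟩ := tmem t ht
    exact (rp_spec ha).right
  have hTr : ∀ t ∈ T, rp lam t = t := by
    intro t ht
    obtain ⟨a, ha, rfl⟩ := tmem t ht
    exact (rp_eq (rp_spec ha)).symm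
  have hTs : ∀ t ∈ T, ∀ t' ∈ T, Unl lam t t' → t = t' := by
    intro t ht t' ht' h
    rw [← hTr t ht, ← hTr t' ht', rp_eq h]
  have crit : ∀ x x', md d x = md d x' → x ≠ x' → Unl lam x x' → {z | Unl lam x z} ∈ Su := by
    intro x x' hm hne hu
    refine (su _).2 ⟨(hS _).2 ((hcr _).2 ⟨Or.inr ⟨x, hu.left, rfl⟩, fun hc => hne (hc (Unl.refl hu.left) hu hm)⟩), x, hu.left, rfl⟩
  have hT : ∀ x x', md d x = md d x' → x ≠ x' → Unl lam x x' → ∃ t ∈ T, Unl lam (md d x) t := by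
    intro x x' hm hne hu
    have hL := crit x x' hm hne hu
    refine ⟨_, Finset.mem_image_of_mem _ hL, ?_⟩
    have h1 : thl {z | Unl lam x z} ∈ {z | Unl lam x z} := thl_spec ⟨x, Unl.refl hu.left⟩
    have h2 : Unl lam x (thl {z | Unl lam x z}) := h1
    exact (unl_md hd hdg h2).trans (rp_spec ((irr_md hd).2 h2.right))
  have M := main_sum hd hdg hT hTi hTs (R := Sr) (fun A hA => (Finset.mem_filter.1 hA).2) (by
    intro x hx hn
    have : cls lam x ∉ S := fun h => hn (Finset.mem_filter.2 ⟨h, x, hx, rfl⟩)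
    simp [hdgd, this])
  have hfib : ∀ t ∈ T, ∑ L ∈ Su with rp lam (md d (thl L)) = t, ((δf L : ℤ) - 1) = (d : ℤ) - Nn d (Unl lam) t := by
    intro t ht
    have ti := hTi t ht
    have irr : ∀ x ∈ fib d t, x ∉ ratC := fun x hx => (irr_md hd).1 ((mem_fib hd).1 hx ▸ ti)
    set f : Circle1 → Set Circle1 := fun x => {x' | Unl lam x x'} with hf
    have c1 : (d : ℤ) - Nn d (Unl lam) t = ∑ K ∈ (fib d t).image f, ((((fib d t).filter (fun x => f x = K)).card : ℤ) - 1) := by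
      rw [Finset.sum_sub_distrib, ← Nat.cast_sum, ← Finset.card_eq_sum_card_image, card_fib hd]
      simp [Nn, hf]
    rw [c1]
    have sub : Su.filter (fun L => rp lam (md d (thl L)) = t) ⊆ (fib d t).image f := by
      intro L hL
      obtain ⟨hL, e⟩ := Finset.mem_filter.1 hL
      obtain ⟨i, eL⟩ := suth L hL
      have h1 := rp_spec (lam := lam) ((irr_md hd).2 i)
      rw [e] at h1
      obtain ⟨x', h2, h3⟩ := unl_lift hd hdg h1
      refine Finset.mem_image.2 ⟨x', (mem_fib hd).2 h2, ?_⟩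
      rw [eL]
      exact (((eqI_unl lam).cls_eq h3.right).2 h3).symm
    rw [← Finset.sum_subset sub]
    · refine Finset.sum_congr rfl fun L hL => ?_
      obtain ⟨x, hx, e⟩ := Finset.mem_image.1 (sub hL)
      have hLS := ((su L).1 (Finset.mem_filter.1 hL).1).1
      have hxL : x ∈ L := by rw [← e]; exact Unl.refl (irr x hx)
      rw [← hδ L hLS t ⟨x, hxL, (mem_fib hd).1 hx⟩, ← Set.ncard_coe_finset]
      congr 3
      ext y
      simp only [Finset.coe_filter, Set.mem_ofPred_eq, mem_fib hd]
      constructor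
      · rintro ⟨hy, hm⟩
        refine ⟨hm, ?_⟩
        have yi : y ∉ ratC := (irr_md hd).1 (hm ▸ ti)
        rw [← e] at hy ⊢
        exact (((eqI_unl lam).cls_eq yi).2 hy).symm
      · rintro ⟨hm, hy⟩
        have yi : y ∉ ratC := (irr_md hd).1 (hm ▸ ti)
        refine ⟨?_, hm⟩
        rw [← hy]; exact Unl.refl yi
    · intro K hK hKn
      obtain ⟨x, hx, rfl⟩ := Finset.mem_image.1 hK
      have : (fib d t).filter (fun y => f y = f x) = {x} := by
        ext y
        simp only [Finset.mem_filter, Finset.mem_singleton]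
        constructor
        · rintro ⟨hy, e⟩
          by_contra hne
          have hu : Unl lam x y := (((eqI_unl lam).cls_eq (irr y hy)).1 e.symm)
          have hm : md d x = md d y := by rw [(mem_fib hd).1 hx, (mem_fib hd).1 hy]
          have hL := crit x y hm (Ne.symm hne) hu
          apply hKn
          refine Finset.mem_filter.2 ⟨hL, ?_⟩
          have h1 : thl {z | Unl lam x z} ∈ {z | Unl lam x z} := thl_spec ⟨x, Unl.refl hu.left⟩
          have h2 : Unl lam x (thl {z | Unl lam x z}) := h1
          rw [← hTr t ht, ← (mem_fib hd).1 hx]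
          exact (rp_eq (unl_md hd hdg h2)).symm
        · rintro rfl
          exact ⟨hx, rfl⟩
      rw [this]; simp
  have hu : ∑ L ∈ Su, ((δf L : ℤ) - 1) = ∑ t ∈ T, ((d : ℤ) - Nn d (Unl lam) t) := by
    rw [← Finset.sum_fiberwise_of_maps_to (s := Su) (t := T) (g := fun L => rp lam (md d (thl L)))
      (fun L hL => Finset.mem_image_of_mem _ hL)]
    exact Finset.sum_congr rfl hfib
  have hr : ∑ A ∈ Sr, ((dg A : ℤ) - 1) = ∑ A ∈ Sr, ((δf A : ℤ) - 1) :=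
    Finset.sum_congr rfl fun A hA => by simp [hdgd, (Finset.mem_filter.1 hA).1]
  have htot : ∑ C ∈ S, ((δf C : ℤ) - 1) = ∑ A ∈ Sr, ((δf A : ℤ) - 1) + ∑ L ∈ Su, ((δf L : ℤ) - 1) :=
    (Finset.sum_filter_add_sum_filter_not S _ _).symm
  have hcast : ((∑ C ∈ S, (δf C - 1) : ℕ) : ℤ) = ∑ C ∈ S, ((δf C : ℤ) - 1) := by
    rw [Nat.cast_sum]
    exact Finset.sum_congr rfl fun C hC => by rw [Nat.cast_sub (hpos C hC)]; simp
  have : (d : ℤ) = 1 + ((∑ C ∈ S, (δf C - 1) : ℕ) : ℤ) := by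
    rw [hcast, htot, hu, M, hr]; ring
  exact_mod_cast this
/-- The degrees of the critical elements of a `d`-invariant rational
lamination satisfy `d = 1 + Σ_{C ∈ Crit(λ)} (δ(C) − 1)`. -/
theorem degree_sum_formula (d : ℕ) (hd : 2 ≤ d) (lam : InvRatLam d)
    (S : Finset (Set Circle1)) (hS : ∀ C : Set Circle1, C ∈ S ↔ CritElem d lam.rel C)
    (δf : Set Circle1 → ℕ) (hδ : ∀ C ∈ S, classDeg d C (δf C)) :
    d = 1 + ∑ C ∈ S, (δf C - 1) := by
  exact main_thm hd lam S hS δf hδ
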